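/- The hexacarpet resistance scaling factor ρ, defined by log ρ = lim_{n→∞} (1/n) log R_n, satisfies 5/4 ≤ ρ ≤ 3/2. -/

import Mathlib

/-!
The potential at a triangle of the hexacarpet graph enters only the star joining it to its three
edges. Eliminating it leaves the energy `Q x y z = ((x - y)² + (y - z)² + (x - z)²) / 6` in the
potentials on the three edges, so that a potential lives on the edges of the subdivision
(`energy_ge`, `exists_energy_eq`). `Adm n x y z e` records, recursively and without reference to
the plane, that some potential on the `n`-fold subdivision of a triangle has traces `x, y, z` on
the sides and energy at most `e`. Affine functionals that separate the sectors show that `Adm` is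
exactly what the hexagon realizes (`adm_of_potential`, `realizable`).

Let `sig n` be the infimum of the `s` such that all constants `x, y, z` on the sides extend to the
`n`-fold subdivision with energy at most `s * Q x y z`.

* Subdividing the triangles of a coarse potential gives `sig (n + m) ≤ sig n * sig m`, and an
  explicit potential gives `sig 1 ≤ 4 / 5`; hence `sig n ≤ (4 / 5) ^ n`.
* Averaging over the halves of each edge turns a potential on a subdivided triangle into one on
  the triangle and costs at most a factor `4 / 3` per level (`Q_subdivision`); hence `(3 / 4) ^ n
  ≤ sig n`, and also `(3 / 4) ^ n * sig m ≤ sig (n + m)`.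
* The effective conductance `1 / RH n` lies between `sig n / 3200` and `sig n / 3`. The upper
  bound comes from the constants `0, 1, 1` on the sides. For the lower bound (`sig_le_of_adm`),
  the optimal potential for `RH` serves as a cutoff function from which potentials for arbitrary
  constants are built, except near the corners, where a fan of triangles is filled with optimal
  extensions from two levels below; this loses a term that is absorbed since `1 / 2 < (3 / 4) ^ 2`
  (`SS_step`).

By subadditivity `log (sig n) / n` converges to some `L` with `log (3 / 4) ≤ L ≤ log (4 / 5)`, and
`log (RH n) / n` converges to `-L`. So `ρ = exp (-L)` satisfies `5 / 4 ≤ ρ ≤ 4 / 3`.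
-/

/-!
Setup for the barycentric subdivision / hexacarpet resistance problem
(Begué, Kelleher, Nelson, Panzo, Pellico, Teplyaev, "Resistance scaling
and the number of spanning trees ..." / Barlow–Bass type estimates).

We realize the repeated barycentric subdivision of a triangle via its
hexagonal planar embedding: for `n ≥ 1` the complex `T_n` is embedded
in the plane with the seven vertices of `T_1` sent to the corners and
the center of a regular hexagon, and deeper subdivisions computed by
taking barycenters.  The `n`-th level triangles are recorded as ordered
triples of points of the plane.
-/

noncomputable section

namespace BarycentricHexacarpet

attribute [local instance] Classical.propDecidable

/-- Points of the plane. -/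
abbrev Pt : Type := ℝ × ℝ

/-- Barycenter of three points. -/
def bary (a b c : Pt) : Pt := (3:ℝ)⁻¹ • (a + b + c)

/-- Midpoint (barycenter of an edge). -/
def mpt (a b : Pt) : Pt := (2:ℝ)⁻¹ • (a + b)

/-- The six triangles of the barycentric subdivision of the triangle `(a,b,c)`,
each recorded as (vertex, barycenter of an edge containing it, barycenter). -/
def children : Pt × Pt × Pt → Set (Pt × Pt × Pt) := fun t =>
  {(t.1, mpt t.1 t.2.1, bary t.1 t.2.1 t.2.2), (t.2.1, mpt t.1 t.2.1, bary t.1 t.2.1 t.2.2),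
   (t.2.1, mpt t.2.1 t.2.2, bary t.1 t.2.1 t.2.2), (t.2.2, mpt t.2.1 t.2.2, bary t.1 t.2.1 t.2.2),
   (t.1, mpt t.1 t.2.2, bary t.1 t.2.1 t.2.2), (t.2.2, mpt t.1 t.2.2, bary t.1 t.2.1 t.2.2)}

/-- The corners of the regular hexagon: `p_0, p_0', p_1, p_1', p_2, p_2'`
are the corners with indices `0, 1, 2, 3, 4, 5`. -/
def hexCorner (i : ℕ) : Pt := (Real.cos (i * (Real.pi / 3)), Real.sin (i * (Real.pi / 3)))

/-- The set of (ordered) triangles of the `n`-th barycentric subdivision `T_n`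
of the triangle, in the hexagonal embedding (defined for `n ≥ 1`):  the six
triangles of `T_1` are the six sectors of the regular hexagon, and each further
subdivision is barycentric. -/
def TriSet : ℕ → Set (Pt × Pt × Pt)
  | 0 => ∅
  | 1 => {t | ∃ i : Fin 6, t = (hexCorner i, hexCorner (i + 1), ((0:ℝ), (0:ℝ)))}
  | (n + 2) => ⋃ t ∈ TriSet (n + 1), children t

/-- `E_n^2`: the 2-simplexes (triangles) of `T_n`, as 3-element vertex sets. -/
def Simp2 (n : ℕ) : Set (Set Pt) :=
  {s | ∃ t ∈ TriSet n, s = {t.1, t.2.1, t.2.2}}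

/-- `E_n^1`: the 1-simplexes (edges) of `T_n`, as 2-element vertex sets. -/
def Simp1 (n : ℕ) : Set (Set Pt) :=
  {s | ∃ t ∈ TriSet n, s = {t.1, t.2.1} ∨ s = {t.2.1, t.2.2} ∨ s = {t.1, t.2.2}}

/-- `E_n^0`: the 0-simplexes (vertices) of `T_n`. -/
def Simp0 (n : ℕ) : Set Pt :=
  {p | ∃ t ∈ TriSet n, p = t.1 ∨ p = t.2.1 ∨ p = t.2.2}

/-- Conductances of the 1-skeleton graph `G_n^T`:  vertices `p ≠ q` are adjacent
iff `{p,q}` is an edge of `T_n`; the conductance is `2` if the edge is contained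
in exactly one triangle of `T_n`, and `1` if it is contained in two triangles. -/
def cT (n : ℕ) (p q : Pt) : ℝ :=
  if p ≠ q ∧ ({p, q} : Set Pt) ∈ Simp1 n then
    (if {f ∈ Simp2 n | p ∈ f ∧ q ∈ f}.ncard = 1 then 2 else 1)
  else 0

/-- Conductances of the (modified) hexacarpet graph `G_n^H`:  its vertex set is
`E_n^2 ∪ E_n^1`, an edge `e ∈ E_n^1` is adjacent to a triangle `f ∈ E_n^2` iff
`e` is a face of `f`, and every edge of the graph has conductance `1/2`. -/
def cH (n : ℕ) (u v : Set Pt) : ℝ :=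
  if (u ∈ Simp1 n ∧ v ∈ Simp2 n ∧ u ⊆ v) ∨ (v ∈ Simp1 n ∧ u ∈ Simp2 n ∧ v ⊆ u)
  then 1 / 2 else 0

/-- The energy of a potential `f` on a weighted graph with conductances `c`:
`E(f) = (1/2) ∑ c p q * (f p - f q)^2`. -/
def energy {V : Type} (c : V → V → ℝ) (f : V → ℝ) : ℝ :=
  (1 / 2) * ∑' p : V, ∑' q : V, c p q * (f p - f q) ^ 2

/-- The effective resistance between `A` and `B`:
`R(A,B) = (inf {E(f) : f ≡ 0 on A, f ≡ 1 on B})⁻¹`. -/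
def effRes {V : Type} (c : V → V → ℝ) (A B : Set V) : ℝ :=
  (sInf {e : ℝ | ∃ f : V → ℝ, (∀ p ∈ A, f p = 0) ∧ (∀ p ∈ B, f p = 1) ∧ e = energy c f})⁻¹

/-- The `i`-th closed side of the hexagon. -/
def hexSide (i : ℕ) : Set Pt := segment ℝ (hexCorner i) (hexCorner (i + 1))

/-- `L_i^{(n,T)}`: the vertices of `G_n^T` whose geometric realization lies in
the `i`-th closed side of the hexagon. -/
def LsetT (n i : ℕ) : Set Pt := {p ∈ Simp0 n | p ∈ hexSide i}

/-- `L_i^{(n,H)}`: the vertices of `G_n^H` whose geometric realization lies in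
the `i`-th closed side of the hexagon. -/
def LsetH (n i : ℕ) : Set (Set Pt) :=
  {v ∈ Simp2 n ∪ Simp1 n | convexHull ℝ v ⊆ hexSide i}

/-- `R_n^T`: the effective resistance in `G_n^T` between
`A_{(n)}^T = L_2^{(n,T)}` and `B_{(n)}^T = L_5^{(n,T)}`. -/
def RT (n : ℕ) : ℝ := effRes (cT n) (LsetT n 2) (LsetT n 5)

/-- `R_n`: the effective resistance in `G_n^H` between
`A_{(n)}^H = L_0^{(n,H)} ∪ L_1^{(n,H)}` and `B_{(n)}^H = L_3^{(n,H)} ∪ L_4^{(n,H)}`. -/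
def RH (n : ℕ) : ℝ :=
  effRes (cH n) (LsetH n 0 ∪ LsetH n 1) (LsetH n 3 ∪ LsetH n 4)

end BarycentricHexacarpet

namespace BarycentricHexacarpet

/-! ### Abstract networks on a subdivided triangle -/

/-- The energy of a three-armed star with conductances `1/2` whose arms carry the potentials
`x, y, z` and whose centre carries the optimal potential `(x + y + z) / 3`. -/
def Q (x y z : ℝ) : ℝ := ((x - y) ^ 2 + (y - z) ^ 2 + (x - z) ^ 2) / 6

/-- The trace of a potential on an oriented edge `p → q` that has been bisected repeatedly.  A word
of length `n` names one of the `2 ^ n` pieces: `false` selects the half at `p`, `true` the half at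
`q`, and each half is oriented towards the midpoint before it is bisected again. -/
abbrev Tr : Type := List Bool → ℝ

/-- The restriction of a trace to one half of its edge. -/
def half (b : Bool) (x : Tr) : Tr := fun w => x (b :: w)

/-- The constant trace. -/
def cst (c : ℝ) : Tr := fun _ => c

/-- The trace with prescribed halves. -/
def pr (x y : Tr) : Tr
  | [] => 0
  | false :: w => x w
  | true :: w => y w

/-- The same trace, read on the edge with the opposite orientation.  Halves are oriented towards
the midpoint, so only the first letter changes. -/
def rev (x : Tr) : Tr
  | [] => x []
  | b :: w => x ((!b) :: w)

/-- `Adm n x y z e`: on the `n`-fold barycentric subdivision of a triangle `(a, b, c)` some potential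
on the edges has energy at most `e` and traces `x`, `y`, `z` on `a → b`, `b → c`, `a → c`.  In the
recursive step `ua, ub, uc` are the traces on the edges from `a, b, c` to the barycenter, and
`vp, vq, vr` those on the edges from the midpoints of `ab`, `bc`, `ac` to the barycenter. -/
def Adm : ℕ → Tr → Tr → Tr → ℝ → Prop
  | 0, x, y, z, e => Q (x []) (y []) (z []) ≤ e
  | n + 1, x, y, z, e => ∃ ua ub uc vp vq vr : Tr, ∃ e0 e1 e2 e3 e4 e5 : ℝ,
      Adm n (half false x) vp ua e0 ∧ Adm n (half true x) vp ub e1 ∧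
      Adm n (half false y) vq ub e2 ∧ Adm n (half true y) vq uc e3 ∧
      Adm n (half false z) vr ua e4 ∧ Adm n (half true z) vr uc e5 ∧
      e0 + e1 + e2 + e3 + e4 + e5 ≤ e

lemma Adm.mono {n : ℕ} {x y z : Tr} {e e' : ℝ} (h : Adm n x y z e) (he : e ≤ e') :
    Adm n x y z e' := by
  cases n with
  | zero => exact le_trans h he
  | succ n =>
    obtain ⟨ua, ub, uc, vp, vq, vr, e0, e1, e2, e3, e4, e5, h0, h1, h2, h3, h4, h5, hs⟩ := h
    exact ⟨ua, ub, uc, vp, vq, vr, e0, e1, e2, e3, e4, e5, h0, h1, h2, h3, h4, h5, hs.trans he⟩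

lemma Adm.congr {n : ℕ} {x y z x' y' z' : Tr} {e : ℝ} (h : Adm n x y z e)
    (hx : ∀ w, w.length = n → x' w = x w) (hy : ∀ w, w.length = n → y' w = y w)
    (hz : ∀ w, w.length = n → z' w = z w) : Adm n x' y' z' e := by
  induction n generalizing x y z x' y' z' e with
  | zero =>
    simp only [Adm, hx [] rfl, hy [] rfl, hz [] rfl] at h ⊢
    exact h
  | succ n ih =>
    obtain ⟨ua, ub, uc, vp, vq, vr, e0, e1, e2, e3, e4, e5, h0, h1, h2, h3, h4, h5, hs⟩ := h
    have key : ∀ (b : Bool) {s s' : Tr}, (∀ w, w.length = n + 1 → s' w = s w) →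
        ∀ w, w.length = n → half b s' w = half b s w :=
      fun b s s' hh w hw => hh (b :: w) (by simp [hw])
    exact ⟨ua, ub, uc, vp, vq, vr, e0, e1, e2, e3, e4, e5,
      ih h0 (key _ hx) (fun _ _ => rfl) (fun _ _ => rfl),
      ih h1 (key _ hx) (fun _ _ => rfl) (fun _ _ => rfl),
      ih h2 (key _ hy) (fun _ _ => rfl) (fun _ _ => rfl),
      ih h3 (key _ hy) (fun _ _ => rfl) (fun _ _ => rfl),
      ih h4 (key _ hz) (fun _ _ => rfl) (fun _ _ => rfl),
      ih h5 (key _ hz) (fun _ _ => rfl) (fun _ _ => rfl), hs⟩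

/-- The Markov property of the energy, for functions of two potentials: it covers linear
combinations, maxima and truncations. -/
lemma Adm.comb (Φ : ℝ → ℝ → ℝ) {A B : ℝ} (hA : 0 ≤ A) (hB : 0 ≤ B)
    (hΦ : ∀ a b a' b', (Φ a b - Φ a' b') ^ 2 ≤ A * (a - a') ^ 2 + B * (b - b') ^ 2) {n : ℕ}
    {x y z x' y' z' : Tr} {e e' : ℝ} (h : Adm n x y z e) (h' : Adm n x' y' z' e') :
    Adm n (fun w => Φ (x w) (x' w)) (fun w => Φ (y w) (y' w)) (fun w => Φ (z w) (z' w))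
      (A * e + B * e') := by
  induction n generalizing x y z x' y' z' e e' with
  | zero =>
    simp only [Adm, Q] at h h' ⊢
    have h1 := hΦ (x []) (x' []) (y []) (y' [])
    have h2 := hΦ (y []) (y' []) (z []) (z' [])
    have h3 := hΦ (x []) (x' []) (z []) (z' [])
    have h4 := mul_le_mul_of_nonneg_left h hA
    have h5 := mul_le_mul_of_nonneg_left h' hB
    linarith
  | succ n ih =>
    obtain ⟨ua, ub, uc, vp, vq, vr, e0, e1, e2, e3, e4, e5, h0, h1, h2, h3, h4, h5, hs⟩ := h
    obtain ⟨ua', ub', uc', vp', vq', vr', e0', e1', e2', e3', e4', e5', h0', h1', h2', h3', h4',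
      h5', hs'⟩ := h'
    refine ⟨_, _, _, _, _, _, _, _, _, _, _, _, ih h0 h0', ih h1 h1', ih h2 h2', ih h3 h3',
      ih h4 h4', ih h5 h5', ?_⟩
    have h6 := mul_le_mul_of_nonneg_left hs hA
    have h7 := mul_le_mul_of_nonneg_left hs' hB
    linarith

lemma Adm.affine {n : ℕ} {x y z : Tr} {e : ℝ} (h : Adm n x y z e) (α β : ℝ) :
    Adm n (fun w => α + β * x w) (fun w => α + β * y w) (fun w => α + β * z w) (β ^ 2 * e) := by
  have := h.comb (fun a _ => α + β * a) (sq_nonneg β) le_rfl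
    (fun a b a' b' => le_of_eq (by ring)) h
  simpa using this

lemma Adm.sup {n : ℕ} {x y z x' y' z' : Tr} {e e' : ℝ} (h : Adm n x y z e)
    (h' : Adm n x' y' z' e') :
    Adm n (fun w => max (x w) (x' w)) (fun w => max (y w) (y' w)) (fun w => max (z w) (z' w))
      (e + e') := by
  have := h.comb max zero_le_one zero_le_one ?_ h'
  · simpa using this
  · intro a b a' b'
    have h1 : |max a b - max a' b'| ≤ max |a - a'| |b - b'| := abs_max_sub_max_le_max a b a' b'
    have h2 : (max a b - max a' b') ^ 2 ≤ (max |a - a'| |b - b'|) ^ 2 := by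
      rw [← sq_abs (max a b - max a' b')]
      exact pow_le_pow_left₀ (abs_nonneg _) h1 2
    rcases max_choice |a - a'| |b - b'| with h3 | h3 <;> rw [h3, sq_abs] at h2 <;>
      nlinarith [sq_nonneg (a - a'), sq_nonneg (b - b')]

/-- Interchanging the first two vertices. -/
lemma Adm.swap12 {n : ℕ} {x y z : Tr} {e : ℝ} (h : Adm n x y z e) : Adm n (rev x) z y e := by
  cases n with
  | zero =>
    simp only [Adm, Q, rev] at h ⊢
    linarith [sq_nonneg (y [] - z []), (by ring : (z [] - y []) ^ 2 = (y [] - z []) ^ 2)]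
  | succ n =>
    obtain ⟨ua, ub, uc, vp, vq, vr, e0, e1, e2, e3, e4, e5, h0, h1, h2, h3, h4, h5, hs⟩ := h
    exact ⟨ub, ua, uc, vp, vr, vq, e1, e0, e4, e5, e2, e3, h1, h0, h4, h5, h2, h3, by linarith⟩

/-- Interchanging the last two vertices. -/
lemma Adm.swap23 {n : ℕ} {x y z : Tr} {e : ℝ} (h : Adm n x y z e) : Adm n z (rev y) x e := by
  cases n with
  | zero =>
    simp only [Adm, Q, rev] at h ⊢
    linarith [(by ring : (z [] - y []) ^ 2 = (y [] - z []) ^ 2),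
      (by ring : (y [] - x []) ^ 2 = (x [] - y []) ^ 2),
      (by ring : (z [] - x []) ^ 2 = (x [] - z []) ^ 2)]
  | succ n =>
    obtain ⟨ua, ub, uc, vp, vq, vr, e0, e1, e2, e3, e4, e5, h0, h1, h2, h3, h4, h5, hs⟩ := h
    exact ⟨ua, uc, ub, vr, vq, vp, e4, e5, e3, e2, e0, e1, h4, h5, h3, h2, h0, h1, by linarith⟩

lemma rev_rev (x : Tr) : rev (rev x) = x := by
  funext w
  cases w <;> simp [rev]

lemma rev_cst (c : ℝ) : rev (cst c) = cst c := by
  funext w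
  cases w <;> rfl

/-! ### Averaging: the lower bound `(3/4)^n` -/

/-- The mean of a trace over the `2 ^ n` pieces of level `n`. -/
def avg : ℕ → Tr → ℝ
  | 0, x => x []
  | n + 1, x => (avg n (half false x) + avg n (half true x)) / 2

lemma avg_cst (n : ℕ) (c : ℝ) : avg n (cst c) = c := by
  induction n with
  | zero => rfl
  | succ n ih =>
    have : ∀ b, half b (cst c) = cst c := fun _ => rfl
    simp [avg, this, ih]

/-- One subdivision step multiplies the energy by at least `3/4` when only the mean potential on
each side is kept.  Dually, splitting the current through each side evenly between its two halves
multiplies the dissipation by at most `4/3`. -/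
lemma Q_subdivision (x1 x2 y1 y2 z1 z2 ua ub uc vp vq vr : ℝ) :
    3 / 4 * Q ((x1 + x2) / 2) ((y1 + y2) / 2) ((z1 + z2) / 2) ≤
      Q x1 vp ua + Q x2 vp ub + Q y1 vq ub + Q y2 vq uc + Q z1 vr ua + Q z2 vr uc := by
  -- the squares come from eliminating `ua, ub, uc, vp, vq, vr, x1, x2, y1` in this order
  have key : Q x1 vp ua + Q x2 vp ub + Q y1 vq ub + Q y2 vq uc + Q z1 vr ua + Q z2 vr uc -
      3 / 4 * Q ((x1 + x2) / 2) ((y1 + y2) / 2) ((z1 + z2) / 2) =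
      2 / 3 * (ua - (x1 + z1 + vp + vr) / 4) ^ 2 + 2 / 3 * (ub - (x2 + y1 + vp + vq) / 4) ^ 2 +
      2 / 3 * (uc - (y2 + z2 + vq + vr) / 4) ^ 2 +
      7 / 12 * (vp - (5 * x1 + 5 * x2 + y1 + z1 + vq + vr) / 14) ^ 2 +
      65 / 112 * (vq - (5 * x1 + 19 * x2 + 71 * y1 + 70 * y2 + z1 + 14 * z2 + 15 * vr) / 195) ^ 2 +
      15 / 26 * (vr - (3 * x1 + x2 + y1 + 3 * y2 + 11 * z1 + 11 * z2) / 30) ^ 2 +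
      107 / 720 * (x1 + (-202 * x2 + 13 * y1 + 29 * y2 - 67 * z1 + 13 * z2 + 0) / 214) ^ 2 +
      26 / 1605 * (x2 + (-61 * y1 + 45 * y2 - 56 * z1 + 46 * z2) / 26) ^ 2 +
      49 / 832 * (y1 - 9 / 7 * y2 - z1 + 9 / 7 * z2) ^ 2 := by
    unfold Q
    ring
  have : 0 ≤ Q x1 vp ua + Q x2 vp ub + Q y1 vq ub + Q y2 vq uc + Q z1 vr ua + Q z2 vr uc -
      3 / 4 * Q ((x1 + x2) / 2) ((y1 + y2) / 2) ((z1 + z2) / 2) := by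
    rw [key]
    positivity
  linarith

lemma Adm.avg_le {n : ℕ} {x y z : Tr} {e : ℝ} (h : Adm n x y z e) :
    (3 / 4) ^ n * Q (avg n x) (avg n y) (avg n z) ≤ e := by
  induction n generalizing x y z e with
  | zero => simpa [Adm, avg] using h
  | succ n ih =>
    obtain ⟨ua, ub, uc, vp, vq, vr, e0, e1, e2, e3, e4, e5, h0, h1, h2, h3, h4, h5, hs⟩ := h
    have h0 := ih h0
    have h1 := ih h1
    have h2 := ih h2
    have h3 := ih h3
    have h4 := ih h4
    have h5 := ih h5
    have key := mul_le_mul_of_nonneg_left (Q_subdivision (avg n (half false x))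
      (avg n (half true x)) (avg n (half false y)) (avg n (half true y)) (avg n (half false z))
      (avg n (half true z)) (avg n ua) (avg n ub) (avg n uc) (avg n vp) (avg n vq) (avg n vr))
      (by positivity : (0 : ℝ) ≤ (3 / 4) ^ n)
    simp only [avg]
    rw [pow_succ]
    linarith

/-- Averaging a potential of level `n + m` over the `n`-fold subdivisions of the edges of level
`m`. -/
lemma Adm.coarse {n m : ℕ} {x y z : Tr} {e : ℝ} (h : Adm (n + m) x y z e) :
    Adm m (fun w => avg n fun v => x (w ++ v)) (fun w => avg n fun v => y (w ++ v))
      (fun w => avg n fun v => z (w ++ v)) ((4 / 3) ^ n * e) := by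
  induction m generalizing x y z e with
  | zero =>
    have h1 := h.avg_le
    have h2 := mul_le_mul_of_nonneg_left h1 (by positivity : (0 : ℝ) ≤ (4 / 3) ^ n)
    rw [add_zero, ← mul_assoc, ← mul_pow] at h2
    norm_num at h2
    exact h2
  | succ m ih =>
    obtain ⟨ua, ub, uc, vp, vq, vr, e0, e1, e2, e3, e4, e5, h0, h1, h2, h3, h4, h5, hs⟩ := h
    refine ⟨_, _, _, _, _, _, _, _, _, _, _, _, ih h0, ih h1, ih h2, ih h3, ih h4, ih h5, ?_⟩
    have := mul_le_mul_of_nonneg_left hs (by positivity : (0 : ℝ) ≤ (4 / 3) ^ n)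
    linarith

/-! ### The conductance constant with constant potentials on the sides -/

/-- The factors `s` such that constant potentials `x, y, z` on the three sides extend to the `n`-fold
subdivision with energy at most `s * Q x y z`. -/
def SS (n : ℕ) : Set ℝ :=
  {s | 0 ≤ s ∧ ∀ x y z : ℝ, Adm n (cst x) (cst y) (cst z) (s * Q x y z)}

/-- The optimal factor in `SS n`. -/
def sig (n : ℕ) : ℝ := sInf (SS n)

lemma SS_zero : (1 : ℝ) ∈ SS 0 := ⟨zero_le_one, fun x y z => by simp [Adm, cst]⟩

/-- The harmonic extension for one subdivision step. -/
lemma SS_one : (4 / 5 : ℝ) ∈ SS 1 := by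
  refine ⟨by norm_num, fun x y z => ?_⟩
  refine ⟨cst ((7 * x + 7 * z + y) / 15), cst ((7 * x + 7 * y + z) / 15),
    cst ((7 * z + 7 * y + x) / 15), cst ((11 * x + 2 * y + 2 * z) / 15),
    cst ((11 * y + 2 * x + 2 * z) / 15), cst ((11 * z + 2 * y + 2 * x) / 15),
    _, _, _, _, _, _, le_rfl, le_rfl, le_rfl, le_rfl, le_rfl, le_rfl, le_of_eq ?_⟩
  simp only [cst, half, Q]
  ring

lemma lift_aux {n : ℕ} {s : ℝ} (hs : s ∈ SS n) {m : ℕ} {x y z : Tr} {e : ℝ} (h : Adm m x y z e) :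
    Adm (n + m) (fun w => x (w.take m)) (fun w => y (w.take m)) (fun w => z (w.take m))
      (s * e) := by
  induction m generalizing x y z e with
  | zero =>
    exact (hs.2 (x []) (y []) (z [])).mono (mul_le_mul_of_nonneg_left h hs.1)
  | succ m ih =>
    obtain ⟨ua, ub, uc, vp, vq, vr, e0, e1, e2, e3, e4, e5, h0, h1, h2, h3, h4, h5, hsum⟩ := h
    refine ⟨_, _, _, _, _, _, _, _, _, _, _, _, ih h0, ih h1, ih h2, ih h3, ih h4, ih h5, ?_⟩
    have := mul_le_mul_of_nonneg_left hsum hs.1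
    linarith

/-- Filling the cells of a level `m` potential with level `n` potentials. -/
lemma SS_mul {n m : ℕ} {s t : ℝ} (hs : s ∈ SS n) (ht : t ∈ SS m) : s * t ∈ SS (n + m) :=
  ⟨mul_nonneg hs.1 ht.1, fun x y z => by
    rw [mul_assoc]
    exact lift_aux hs (ht.2 x y z)⟩

lemma SS_pow (n : ℕ) : ((4 / 5 : ℝ)) ^ n ∈ SS n := by
  induction n with
  | zero => simpa using SS_zero
  | succ n ih => exact SS_mul ih SS_one

lemma SS_lower {n : ℕ} {s : ℝ} (hs : s ∈ SS n) : (3 / 4 : ℝ) ^ n ≤ s := by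
  have := (hs.2 1 0 0).avg_le
  simp only [avg_cst, Q] at this
  norm_num at this
  linarith

lemma SS_bdd (n : ℕ) : BddBelow (SS n) := ⟨0, fun _ hs => hs.1⟩

lemma SS_ne (n : ℕ) : (SS n).Nonempty := ⟨_, SS_pow n⟩

lemma sig_le {n : ℕ} {s : ℝ} (hs : s ∈ SS n) : sig n ≤ s := csInf_le (SS_bdd n) hs

lemma le_sig {n : ℕ} {c : ℝ} (h : ∀ s ∈ SS n, c ≤ s) : c ≤ sig n := le_csInf (SS_ne n) h

lemma sig_lower (n : ℕ) : (3 / 4 : ℝ) ^ n ≤ sig n := le_sig fun _ => SS_lower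

lemma sig_pos (n : ℕ) : 0 < sig n := lt_of_lt_of_le (by positivity) (sig_lower n)

lemma sig_upper (n : ℕ) : sig n ≤ (4 / 5) ^ n := sig_le (SS_pow n)

lemma sig_mul (n m : ℕ) : sig (n + m) ≤ sig n * sig m := by
  have h1 : ∀ t ∈ SS m, sig (n + m) ≤ sig n * t := by
    intro t ht
    have htpos : 0 < t := lt_of_lt_of_le (by positivity) (SS_lower ht)
    rw [← div_le_iff₀ htpos]
    exact le_sig fun s hs => (div_le_iff₀ htpos).2 (sig_le (SS_mul hs ht))
  rw [mul_comm, ← div_le_iff₀ (sig_pos n)]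
  exact le_sig fun t ht => (div_le_iff₀ (sig_pos n)).2 (by rw [mul_comm]; exact h1 t ht)

/-- Averaging also gives a bound in the opposite direction. -/
lemma sig_add_ge (n m : ℕ) : (3 / 4) ^ n * sig m ≤ sig (n + m) := by
  refine le_sig fun s hs => ?_
  have h : (4 / 3 : ℝ) ^ n * s ∈ SS m := by
    refine ⟨mul_nonneg (by positivity) hs.1, fun x y z => ?_⟩
    have := (hs.2 x y z).coarse
    rw [← mul_assoc] at this
    have e : ∀ c : ℝ, (fun w : List Bool => avg n fun v => cst c (w ++ v)) = cst c :=
      fun c => funext fun _ => avg_cst n c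
    rwa [e, e, e] at this
  have h1 := mul_le_mul_of_nonneg_left (sig_le h) (by positivity : (0 : ℝ) ≤ (3 / 4) ^ n)
  rw [← mul_assoc, ← mul_pow] at h1
  norm_num at h1
  exact h1

/-! ### Interpolation with cutoff functions -/

section Interpolation

variable (T : Tr)

/-- The trace on `p → q` which interpolates between the value `a` at `p` and the value `b` at `q`;
`T` is the profile of a cutoff function that equals `1` near the endpoint carrying the larger
value. -/
def itp (a b : ℝ) : Tr := fun w =>
  if a ≤ b then a + (b - a) * T w else b + (a - b) * rev T w

lemma rev_itp (a b : ℝ) : rev (itp T a b) = itp T b a := by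
  funext w
  rcases lt_trichotomy a b with h | h | h
  · cases w <;> simp [rev, itp, h.le, not_le.2 h]
  · subst h
    cases w <;> simp [rev, itp]
  · cases w <;> simp [rev, itp, h.le, not_le.2 h]

lemma itp_self (a : ℝ) : itp T a a = cst a := by
  funext w
  simp [itp, cst]

variable {T} (h0 : ∀ w, 0 ≤ T w) (h1 : ∀ w, T w ≤ 1) (h2 : ∀ w, T w = 1 ∨ rev T w = 1)
  {n : ℕ} {e : ℝ} (hT : Adm n (cst 0) T T e)

include h0 in
lemma rev_nonneg (w : List Bool) : 0 ≤ rev T w := by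
  cases w with
  | nil => exact h0 _
  | cons b w => exact h0 _

include h1 in
lemma rev_le_one (w : List Bool) : rev T w ≤ 1 := by
  cases w with
  | nil => exact h1 _
  | cons b w => exact h1 _

include h0 h1 h2 hT in
/-- Interpolation of the corner values `p ≤ q ≤ r` by `p + (q - p) * max g_b g_c + (r - q) * g_c`,
where `g_v` is the cutoff function around the corner `v`. -/
lemma regular_sorted {p q r : ℝ} (hpq : p ≤ q) (hqr : q ≤ r) :
    Adm n (itp T p q) (itp T q r) (itp T p r)
      (4 * e * ((p - q) ^ 2 + (q - r) ^ 2 + (p - r) ^ 2)) := by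
  have he : 0 ≤ e := le_trans (by unfold Q; positivity) hT.avg_le
  have gb : Adm n T (rev T) (cst 0) e := hT.swap23
  have h := (gb.sup hT).comb (fun a b => p + (q - p) * a + (r - q) * b)
    (A := 2 * (q - p) ^ 2) (B := 2 * (r - q) ^ 2) (by positivity) (by positivity)
    (fun a b a' b' => by nlinarith [sq_nonneg ((q - p) * (a - a') - (r - q) * (b - b'))]) hT
  refine (h.congr ?_ ?_ ?_).mono ?_
  · intro w _
    simp [itp, hpq, cst, max_eq_left (h0 w)]
  · intro w _
    have : max (rev T w) (T w) = 1 := by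
      rcases h2 w with h | h <;> rw [h]
      · exact max_eq_right (rev_le_one h1 w)
      · exact max_eq_left (h1 w)
    simp [itp, hqr, this]
  · intro w _
    simp [itp, hpq.trans hqr, cst, max_eq_right (h0 w)]
    ring
  · nlinarith [mul_nonneg he (sq_nonneg (p - q)), mul_nonneg he (sq_nonneg (q - r)),
      mul_nonneg he (sq_nonneg (p - r))]

include h0 h1 h2 hT in
lemma regular (p q r : ℝ) : Adm n (itp T p q) (itp T q r) (itp T p r)
    (4 * e * ((p - q) ^ 2 + (q - r) ^ 2 + (p - r) ^ 2)) := by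
  have S := fun {p q r : ℝ} => @regular_sorted T h0 h1 h2 n e hT p q r
  rcases le_total p q with hpq | hpq <;> rcases le_total q r with hqr | hqr <;>
    rcases le_total p r with hpr | hpr
  · exact S hpq hqr
  · exact S hpq hqr
  · have := (S hpr hqr).swap23
    rw [rev_itp] at this
    exact this.mono (le_of_eq (by ring))
  · have := ((S hpr hpq).swap12).swap23
    rw [rev_itp, rev_itp] at this
    exact this.mono (le_of_eq (by ring))
  · have := (S hpq hpr).swap12
    rw [rev_itp] at this
    exact this.mono (le_of_eq (by ring))
  · have := ((S hqr hpr).swap23).swap12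
    rw [rev_itp, rev_itp] at this
    exact this.mono (le_of_eq (by ring))
  · have := (((S hqr hpq).swap12).swap23).swap12
    rw [rev_itp, rev_itp, rev_itp] at this
    exact this.mono (le_of_eq (by ring))
  · have := (((S hqr hpq).swap12).swap23).swap12
    rw [rev_itp, rev_itp, rev_itp] at this
    exact this.mono (le_of_eq (by ring))

variable {s : ℝ} (hs : s ∈ SS n)

include h0 h1 hT hs in
/-- A cell at which the potential jumps: the sides meeting in the first vertex carry the constants
`α` and `γ`, and the opposite side interpolates between them. -/
lemma fan (α γ : ℝ) :
    Adm n (cst α) (itp T α γ) (cst γ) ((α - γ) ^ 2 * (e + s / 3)) := by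
  have main : ∀ α γ : ℝ, α ≤ γ →
      Adm n (cst α) (itp T α γ) (cst γ) ((α - γ) ^ 2 * (e + s / 3)) := by
    intro α γ hαγ
    have h := (hT.sup (hs.2 0 0 1)).affine α (γ - α)
    refine (h.congr ?_ ?_ ?_).mono (le_of_eq ?_)
    · intro w _
      simp [cst]
    · intro w _
      simp [cst, itp, hαγ, max_eq_left (h0 w)]
    · intro w _
      simp [cst, max_eq_right (h1 w)]
    · unfold Q
      ring
  rcases le_total α γ with h | h
  · exact main α γ h
  · have := (main γ α h).swap23
    rw [rev_itp] at this
    exact this.mono (le_of_eq (by ring))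

include h0 h1 h2 hT hs in
/-- The level `n + 1` cell at a corner of the triangle: the potential jumps from `α` to `γ` at the
first vertex and takes the values `α`, `β` at the other two. -/
lemma corner_cell (α β γ : ℝ) :
    Adm (n + 1) (cst α) (pr (cst α) (itp T β α)) (pr (cst γ) (itp T β γ))
      ((α - γ) ^ 2 / 2 * (s / 3) + 16 * e * ((α - γ) ^ 2 + (β - α) ^ 2 + (β - γ) ^ 2)) := by
  have he : 0 ≤ e := le_trans (by unfold Q; positivity) hT.avg_le
  have F := fun a b => @fan T h0 h1 n e hT s hs a b
  have R := fun a b c => @regular T h0 h1 h2 n e hT a b c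
  -- the value at the barycenter of the cell
  obtain ⟨δ, hδ⟩ : ∃ δ, δ = (α + γ) / 2 := ⟨_, rfl⟩
  have r1 := R α α δ
  have r2 := R β α δ
  have r3 := R β γ δ
  rw [itp_self] at r1
  refine ⟨cst δ, itp T α δ, itp T β δ, itp T α δ, itp T α δ, itp T γ δ, _, _, _, _, _, _,
    F α δ, r1, r1, r2, F γ δ, r3, ?_⟩
  subst hδ
  have hd : 0 ≤ e * ((α - γ) ^ 2) := by positivity
  have hd2 : 0 ≤ e * ((β - α) ^ 2) := by positivity
  have hd3 : 0 ≤ e * ((β - γ) ^ 2) := by positivity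
  nlinarith

include h0 h1 h2 hT hs in
/-- Constant boundary potentials of level `n + 2`.  Jumps occur only inside the fans of four cells
at the corners, where their total cost is `s / 2`; everything else is interpolated. -/
lemma SS_step : 200 * e + s / 2 ∈ SS (n + 2) := by
  have he : 0 ≤ e := le_trans (by unfold Q; positivity) hT.avg_le
  refine ⟨by linarith [hs.1], fun x y z => ?_⟩
  have K := fun a b c => @corner_cell T h0 h1 h2 n e hT s hs a b c
  obtain ⟨β, hβ⟩ : ∃ β, β = (x + y + z) / 3 := ⟨_, rfl⟩
  obtain ⟨ga, hga⟩ : ∃ g, g = (x + z) / 2 := ⟨_, rfl⟩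
  obtain ⟨gb, hgb⟩ : ∃ g, g = (x + y) / 2 := ⟨_, rfl⟩
  obtain ⟨gc, hgc⟩ : ∃ g, g = (y + z) / 2 := ⟨_, rfl⟩
  refine ⟨pr (cst ga) (itp T β ga), pr (cst gb) (itp T β gb), pr (cst gc) (itp T β gc),
    pr (cst x) (itp T β x), pr (cst y) (itp T β y), pr (cst z) (itp T β z), _, _, _, _, _, _,
    K x β ga, K x β gb, K y β gb, K y β gc, K z β ga, K z β gc, ?_⟩
  subst hβ hga hgb hgc
  unfold Q
  have hd : 0 ≤ e * ((x - y) ^ 2) := by positivity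
  have hd2 : 0 ≤ e * ((y - z) ^ 2) := by positivity
  have hd3 : 0 ≤ e * ((x - z) ^ 2) := by positivity
  nlinarith

end Interpolation

/-- Comparison with the constants `sig n`: a potential that vanishes on the side `a → b` and equals
`1` on the halves at `c` of the other two sides has energy at least `sig (n + 1) / 3200`.  Such a
potential may be made symmetric and truncated to `[0, 1]`, and then it serves as a cutoff
function. -/
lemma sig_le_of_adm {n : ℕ} {x y z : Tr} {e : ℝ} (h : Adm (n + 1) x y z e)
    (hx : ∀ w, w.length = n + 1 → x w = 0) (hy : ∀ w, w.length = n → y (true :: w) = 1)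
    (hz : ∀ w, w.length = n → z (true :: w) = 1) : sig (n + 1) ≤ 3200 * e := by
  have hsym := h.comb (fun a b => max 0 (min 1 ((a + b) / 2))) (A := 1 / 2) (B := 1 / 2)
    (by norm_num) (by norm_num) ?_ h.swap12
  · obtain ⟨T, hTdef⟩ : ∃ T : Tr, T = fun w => match w with
        | [] => 1
        | false :: w => max 0 (min 1 ((y (false :: w) + z (false :: w)) / 2))
        | true :: _ => 1 := ⟨_, rfl⟩
    have hT : Adm (n + 1) (cst 0) T T e := by
      refine (hsym.congr ?_ ?_ ?_).mono (le_of_eq (by ring))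
      · intro w hw
        have : rev x w = 0 := by
          cases w with
          | nil => simp at hw
          | cons b w => exact hx _ (by simpa using hw)
        simp [cst, hx w hw, this]
      · intro w hw
        match w, hw with
        | false :: w, _ => simp [hTdef]
        | true :: w, hw =>
          have hw : w.length = n := by simpa using hw
          simp [hTdef, hy w hw, hz w hw]
      · intro w hw
        match w, hw with
        | false :: w, _ => simp [hTdef, add_comm]
        | true :: w, hw =>
          have hw : w.length = n := by simpa using hw
          simp [hTdef, hy w hw, hz w hw]
    have h0 : ∀ w, 0 ≤ T w := by
      intro w
      match w with
      | [] => simp [hTdef]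
      | false :: w => simp [hTdef]
      | true :: w => simp [hTdef]
    have h1 : ∀ w, T w ≤ 1 := by
      intro w
      match w with
      | [] => simp [hTdef]
      | false :: w => simp [hTdef]
      | true :: w => simp [hTdef]
    have h2 : ∀ w, T w = 1 ∨ rev T w = 1 := by
      intro w
      match w with
      | [] => simp [hTdef]
      | false :: w => right; simp [hTdef, rev]
      | true :: w => left; simp [hTdef]
    have h3 : sig (n + 1 + 2) ≤ 200 * e + sig (n + 1) / 2 := by
      have : 2 * (sig (n + 1 + 2) - 200 * e) ≤ sig (n + 1) :=
        le_sig fun s hs => by linarith [sig_le (SS_step h0 h1 h2 hT hs)]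
      linarith
    have h4 := sig_add_ge 2 (n + 1)
    rw [add_comm 2 (n + 1)] at h4
    linarith
  · intro a b a' b'
    have h1 : |max 0 (min 1 ((a + b) / 2)) - max 0 (min 1 ((a' + b') / 2))| ≤
        |(a + b) / 2 - (a' + b') / 2| := by
      refine (abs_max_sub_max_le_max _ _ _ _).trans ?_
      simp only [sub_self, abs_zero]
      refine max_le (abs_nonneg _) ((abs_min_sub_min_le_max _ _ _ _).trans ?_)
      simp
    have h2 := pow_le_pow_left₀ (abs_nonneg _) h1 2
    rw [sq_abs, sq_abs] at h2
    nlinarith [sq_nonneg ((a - a') - (b - b'))]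

/-! ### Descendants of a triangle -/

/-- The six triangles `a p o`, `b p o`, `b q o`, `c q o`, `a r o`, `c r o` around the point `o`. -/
def fanTri (a b c p q r o : Pt) : Fin 6 → Pt × Pt × Pt :=
  ![(a, p, o), (b, p, o), (b, q, o), (c, q, o), (a, r, o), (c, r, o)]

/-- The children of a triangle, indexed. -/
def kid (t : Pt × Pt × Pt) : Fin 6 → Pt × Pt × Pt :=
  fanTri t.1 t.2.1 t.2.2 (mpt t.1 t.2.1) (mpt t.2.1 t.2.2) (mpt t.1 t.2.2) (bary t.1 t.2.1 t.2.2)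

/-- The triangles of the `n`-fold barycentric subdivision of `t`. -/
def desc : ℕ → Pt × Pt × Pt → Set (Pt × Pt × Pt)
  | 0, t => {t}
  | n + 1, t => ⋃ i, desc n (kid t i)

/-- The vertex set of a triangle. -/
def vs (t : Pt × Pt × Pt) : Set Pt := {t.1, t.2.1, t.2.2}

/-- The triangles of the `n`-fold subdivision of `t`, as vertex sets. -/
def TS (n : ℕ) (t : Pt × Pt × Pt) : Set (Set Pt) := vs '' desc n t

/-- The edges of the `n`-fold subdivision of `t`, as vertex sets. -/
def ES (n : ℕ) (t : Pt × Pt × Pt) : Set (Set Pt) :=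
  {e | ∃ u ∈ desc n t, e = {u.1, u.2.1} ∨ e = {u.2.1, u.2.2} ∨ e = {u.1, u.2.2}}

/-- The piece of the repeatedly bisected edge `a → b` named by a word, as in `Tr`. -/
def sube : Pt → Pt → List Bool → Set Pt
  | a, b, [] => {a, b}
  | a, b, false :: w => sube a (mpt a b) w
  | a, b, true :: w => sube b (mpt a b) w

lemma children_eq (t : Pt × Pt × Pt) : children t = Set.range (kid t) := by
  ext s
  simp only [children, kid, fanTri, Set.mem_range, Fin.exists_fin_succ, Set.mem_insert_iff,
    Set.mem_singleton_iff]
  simp [eq_comm]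

lemma desc_succ' (n : ℕ) (t : Pt × Pt × Pt) :
    desc (n + 1) t = ⋃ s ∈ desc n t, children s := by
  induction n generalizing t with
  | zero =>
    ext s
    simp [desc, children_eq, eq_comm]
  | succ n ih =>
    have h1 : desc (n + 1 + 1) t = ⋃ i, desc (n + 1) (kid t i) := rfl
    have h2 : desc (n + 1) t = ⋃ i, desc n (kid t i) := rfl
    rw [h1, h2]
    simp only [ih, Set.biUnion_iUnion]

lemma TriSet_eq (n : ℕ) :
    TriSet (n + 1) = ⋃ t ∈ TriSet 1, desc n t := by
  induction n with
  | zero => simp [desc]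
  | succ n ih =>
    have h1 : TriSet (n + 1 + 1) = ⋃ t ∈ TriSet (n + 1), children t := rfl
    rw [h1, ih]
    simp only [desc_succ', Set.biUnion_iUnion]

lemma ES_zero (t : Pt × Pt × Pt) :
    ES 0 t = {{t.1, t.2.1}, {t.2.1, t.2.2}, {t.1, t.2.2}} := by
  ext e
  simp [ES, desc]

lemma ES_succ (n : ℕ) (t : Pt × Pt × Pt) : ES (n + 1) t = ⋃ i, ES n (kid t i) := by
  ext e
  simp only [ES, desc, Set.mem_iUnion, Set.mem_ofPred_eq]
  exact ⟨fun ⟨u, ⟨i, hi⟩, h⟩ => ⟨i, u, hi, h⟩, fun ⟨i, u, hi, h⟩ => ⟨u, ⟨i, hi⟩, h⟩⟩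

lemma TS_succ (n : ℕ) (t : Pt × Pt × Pt) : TS (n + 1) t = ⋃ i, TS n (kid t i) :=
  Set.image_iUnion

lemma mpt_comm (a b : Pt) : mpt a b = mpt b a := by simp [mpt, add_comm]

lemma bary_swap12 (a b c : Pt) : bary b a c = bary a b c := by simp [bary, add_comm]

lemma bary_swap23 (a b c : Pt) : bary a c b = bary a b c := by simp [bary, add_right_comm]

lemma kid_swap12 (a b c : Pt) :
    kid (b, a, c) = kid (a, b, c) ∘ ![1, 0, 4, 5, 2, 3] := by
  funext i
  fin_cases i <;> simp [kid, fanTri, mpt_comm b a, bary_swap12 a b c]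

lemma kid_swap23 (a b c : Pt) :
    kid (a, c, b) = kid (a, b, c) ∘ ![4, 5, 3, 2, 0, 1] := by
  funext i
  fin_cases i <;> simp [kid, fanTri, mpt_comm c b, bary_swap23 a b c]

lemma ES_swap12 (n : ℕ) (a b c : Pt) : ES n (b, a, c) = ES n (a, b, c) := by
  cases n with
  | zero =>
    ext e
    simp only [ES_zero, Set.mem_insert_iff, Set.mem_singleton_iff, Set.pair_comm b a]
    tauto
  | succ n =>
    rw [ES_succ, ES_succ, kid_swap12]
    exact Function.Surjective.iUnion_comp (f := ![1, 0, 4, 5, 2, 3]) (by decide)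
      fun i => ES n (kid (a, b, c) i)

lemma ES_swap23 (n : ℕ) (a b c : Pt) : ES n (a, c, b) = ES n (a, b, c) := by
  cases n with
  | zero =>
    ext e
    simp only [ES_zero, Set.mem_insert_iff, Set.mem_singleton_iff, Set.pair_comm c b]
    tauto
  | succ n =>
    rw [ES_succ, ES_succ, kid_swap23]
    exact Function.Surjective.iUnion_comp (f := ![4, 5, 3, 2, 0, 1]) (by decide)
      fun i => ES n (kid (a, b, c) i)

lemma TS_swap12 (n : ℕ) (a b c : Pt) : TS n (b, a, c) = TS n (a, b, c) := by
  cases n with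
  | zero => simp [TS, desc, vs, Set.insert_comm]
  | succ n =>
    rw [TS_succ, TS_succ, kid_swap12]
    exact Function.Surjective.iUnion_comp (f := ![1, 0, 4, 5, 2, 3]) (by decide)
      fun i => TS n (kid (a, b, c) i)

lemma desc_finite (n : ℕ) (t : Pt × Pt × Pt) : (desc n t).Finite := by
  induction n generalizing t with
  | zero => exact Set.finite_singleton t
  | succ n ih => exact Set.finite_iUnion fun i => ih _

lemma TS_finite (n : ℕ) (t : Pt × Pt × Pt) : (TS n t).Finite := (desc_finite n t).image _

lemma ES_finite (n : ℕ) (t : Pt × Pt × Pt) : (ES n t).Finite := by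
  induction n generalizing t with
  | zero => rw [ES_zero]; exact Set.toFinite _
  | succ n ih => rw [ES_succ]; exact Set.finite_iUnion fun i => ih _

lemma sube_mem_ES {n : ℕ} (a b c : Pt) {w : List Bool} (hw : w.length = n) :
    sube a b w ∈ ES n (a, b, c) := by
  induction n generalizing a b c w with
  | zero =>
    obtain rfl := List.eq_nil_of_length_eq_zero hw
    simp [ES_zero, sube]
  | succ n ih =>
    rw [ES_succ, Set.mem_iUnion]
    match w, hw with
    | false :: w, hw => exact ⟨0, ih _ _ _ (by simpa using hw)⟩
    | true :: w, hw => exact ⟨1, ih _ _ _ (by simpa using hw)⟩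

/-! ### Affine functionals, nondegeneracy and separation -/

/-- Affine functionals on the plane. -/
def Aff (f : Pt → ℝ) : Prop := ∃ A B C : ℝ, ∀ P : Pt, f P = A * P.1 + B * P.2 + C

lemma Aff.mpt {f : Pt → ℝ} (hf : Aff f) (a b : Pt) :
    f (mpt a b) = (f a + f b) / 2 := by
  obtain ⟨A, B, C, h⟩ := hf
  simp only [h, BarycentricHexacarpet.mpt, Prod.smul_fst, Prod.smul_snd, Prod.fst_add,
    Prod.snd_add, smul_eq_mul]
  ring

lemma Aff.bary {f : Pt → ℝ} (hf : Aff f) (a b c : Pt) :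
    f (bary a b c) = (f a + f b + f c) / 3 := by
  obtain ⟨A, B, C, h⟩ := hf
  simp only [h, BarycentricHexacarpet.bary, Prod.smul_fst, Prod.smul_snd, Prod.fst_add,
    Prod.snd_add, smul_eq_mul]
  ring

lemma Aff.neg {f : Pt → ℝ} (hf : Aff f) : Aff fun P => -f P := by
  obtain ⟨A, B, C, h⟩ := hf
  exact ⟨-A, -B, -C, fun P => by
    change -f P = _
    rw [h]
    ring⟩

/-- Twice the signed area of a triangle. -/
def det (t : Pt × Pt × Pt) : ℝ :=
  (t.2.1.1 - t.1.1) * (t.2.2.2 - t.1.2) - (t.2.1.2 - t.1.2) * (t.2.2.1 - t.1.1)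

lemma det_kid (t : Pt × Pt × Pt) (i : Fin 6) :
    det (kid t i) = det t / 6 ∨ det (kid t i) = -(det t / 6) := by
  obtain ⟨⟨a1, a2⟩, ⟨b1, b2⟩, ⟨c1, c2⟩⟩ := t
  fin_cases i
  all_goals simp [kid, fanTri, det, mpt, bary]
  · left; ring
  · right; ring
  · left; ring
  · right; ring
  · right; ring
  · left; ring

lemma det_kid_ne {t : Pt × Pt × Pt} (h : det t ≠ 0) (i : Fin 6) : det (kid t i) ≠ 0 := by
  have : det t / 6 ≠ 0 := div_ne_zero h (by norm_num)
  rcases det_kid t i with h1 | h1 <;> rw [h1]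
  · exact this
  · exact neg_ne_zero.2 this

lemma det_desc {n : ℕ} {t u : Pt × Pt × Pt} (h : det t ≠ 0) (hu : u ∈ desc n t) : det u ≠ 0 := by
  induction n generalizing t with
  | zero => rw [desc, Set.mem_singleton_iff] at hu; rwa [hu]
  | succ n ih =>
    obtain ⟨i, hi⟩ := Set.mem_iUnion.1 hu
    exact ih (det_kid_ne h i) hi

lemma ne_of_det {t : Pt × Pt × Pt} (h : det t ≠ 0) :
    t.1 ≠ t.2.1 ∧ t.2.1 ≠ t.2.2 ∧ t.1 ≠ t.2.2 := by
  refine ⟨fun h1 => h ?_, fun h1 => h ?_, fun h1 => h ?_⟩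
  · simp [det, h1]
  · simp only [det, h1]; ring
  · simp [det, h1]

lemma Aff.eq_zero {k : Pt → ℝ} (hk : Aff k) {u : Pt × Pt × Pt} (hd : det u ≠ 0)
    (z1 : k u.1 = 0) (z2 : k u.2.1 = 0) (z3 : k u.2.2 = 0) (X : Pt) : k X = 0 := by
  obtain ⟨A, B, C, hk⟩ := hk
  rw [hk] at z1 z2 z3 ⊢
  have hA : A * det u = 0 := by
    unfold det
    linear_combination (u.2.2.2 - u.1.2) * (z2 - z1) - (u.2.1.2 - u.1.2) * (z3 - z1)
  have hB : B * det u = 0 := by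
    unfold det
    linear_combination (u.2.1.1 - u.1.1) * (z3 - z1) - (u.2.2.1 - u.1.1) * (z2 - z1)
  have hA := (mul_eq_zero.1 hA).resolve_right hd
  have hB := (mul_eq_zero.1 hB).resolve_right hd
  subst hA hB
  linarith

lemma nonneg_desc {f : Pt → ℝ} (hf : Aff f) {n : ℕ} {t u : Pt × Pt × Pt} (h1 : 0 ≤ f t.1)
    (h2 : 0 ≤ f t.2.1) (h3 : 0 ≤ f t.2.2) (hu : u ∈ desc n t) :
    0 ≤ f u.1 ∧ 0 ≤ f u.2.1 ∧ 0 ≤ f u.2.2 := by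
  induction n generalizing t with
  | zero => rw [desc, Set.mem_singleton_iff] at hu; rw [hu]; exact ⟨h1, h2, h3⟩
  | succ n ih =>
    obtain ⟨i, hi⟩ := Set.mem_iUnion.1 hu
    have k1 : 0 ≤ f (mpt t.1 t.2.1) := by rw [hf.mpt]; linarith
    have k2 : 0 ≤ f (mpt t.2.1 t.2.2) := by rw [hf.mpt]; linarith
    have k3 : 0 ≤ f (mpt t.1 t.2.2) := by rw [hf.mpt]; linarith
    have k4 : 0 ≤ f (bary t.1 t.2.1 t.2.2) := by rw [hf.bary]; linarith
    fin_cases i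
    · exact ih (t := (t.1, mpt t.1 t.2.1, bary t.1 t.2.1 t.2.2)) h1 k1 k4 hi
    · exact ih (t := (t.2.1, mpt t.1 t.2.1, bary t.1 t.2.1 t.2.2)) h2 k1 k4 hi
    · exact ih (t := (t.2.1, mpt t.2.1 t.2.2, bary t.1 t.2.1 t.2.2)) h2 k2 k4 hi
    · exact ih (t := (t.2.2, mpt t.2.1 t.2.2, bary t.1 t.2.1 t.2.2)) h3 k2 k4 hi
    · exact ih (t := (t.1, mpt t.1 t.2.2, bary t.1 t.2.1 t.2.2)) h1 k3 k4 hi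
    · exact ih (t := (t.2.2, mpt t.1 t.2.2, bary t.1 t.2.1 t.2.2)) h3 k3 k4 hi

lemma nonneg_ES {f : Pt → ℝ} (hf : Aff f) {n : ℕ} {t : Pt × Pt × Pt} (h1 : 0 ≤ f t.1)
    (h2 : 0 ≤ f t.2.1) (h3 : 0 ≤ f t.2.2) {e : Set Pt} (he : e ∈ ES n t) :
    ∀ P ∈ e, 0 ≤ f P := by
  obtain ⟨u, hu, h⟩ := he
  obtain ⟨k1, k2, k3⟩ := nonneg_desc hf h1 h2 h3 hu
  rintro P hP
  rcases h with rfl | rfl | rfl <;> rcases hP with rfl | rfl <;> assumption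

/-- An edge cannot lie on a line that meets the triangle at most in its first vertex. -/
lemma exists_ne_zero {f : Pt → ℝ} (hf : Aff f) {n : ℕ} {a b c : Pt} (ha : 0 ≤ f a)
    (hb : 0 < f b) (hc : 0 < f c) {e : Set Pt} (he : e ∈ ES n (a, b, c)) : ∃ P ∈ e, f P ≠ 0 := by
  induction n generalizing a b c with
  | zero =>
    rw [ES_zero] at he
    rcases he with rfl | rfl | rfl
    · exact ⟨b, by simp, hb.ne'⟩
    · exact ⟨b, by simp, hb.ne'⟩
    · exact ⟨c, by simp, hc.ne'⟩
  | succ n ih =>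
    rw [ES_succ] at he
    obtain ⟨i, hi⟩ := Set.mem_iUnion.1 he
    have k1 : 0 < f (mpt a b) := by rw [hf.mpt]; linarith
    have k2 : 0 < f (mpt b c) := by rw [hf.mpt]; linarith
    have k3 : 0 < f (mpt a c) := by rw [hf.mpt]; linarith
    have k4 : 0 < f (bary a b c) := by rw [hf.bary]; linarith
    fin_cases i
    · exact ih ha k1 k4 hi
    · exact ih hb.le k1 k4 hi
    · exact ih hb.le k2 k4 hi
    · exact ih hc.le k2 k4 hi
    · exact ih ha k3 k4 hi
    · exact ih hc.le k3 k4 hi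

/-- An edge on the line through the first two vertices is a piece of that side. -/
lemma edge_on_side12 {f : Pt → ℝ} (hf : Aff f) {n : ℕ} {a b c : Pt} (ha : f a = 0)
    (hb : f b = 0) (hc : 0 < f c) {e : Set Pt} (he : e ∈ ES n (a, b, c)) (h0 : ∀ P ∈ e, f P = 0) :
    ∃ w : List Bool, w.length = n ∧ e = sube a b w := by
  induction n generalizing a b c with
  | zero =>
    rw [ES_zero] at he
    rcases he with rfl | rfl | rfl
    · exact ⟨[], rfl, rfl⟩
    · exact absurd (h0 c (by simp)) hc.ne'
    · exact absurd (h0 c (by simp)) hc.ne'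
  | succ n ih =>
    rw [ES_succ] at he
    obtain ⟨i, hi⟩ := Set.mem_iUnion.1 he
    have k1 : f (mpt a b) = 0 := by rw [hf.mpt]; linarith
    have k2 : 0 < f (mpt b c) := by rw [hf.mpt]; linarith
    have k3 : 0 < f (mpt a c) := by rw [hf.mpt]; linarith
    have k4 : 0 < f (bary a b c) := by rw [hf.bary]; linarith
    have no : ∀ {v s : Pt}, 0 ≤ f v → 0 < f s → e ∈ ES n (v, s, bary a b c) → False := by
      intro v s hv hs h
      obtain ⟨P, hP, h1⟩ := exists_ne_zero hf hv hs k4 h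
      exact h1 (h0 P hP)
    fin_cases i
    · obtain ⟨w, hw, h⟩ := ih ha k1 k4 hi
      exact ⟨false :: w, by simp [hw], h⟩
    · obtain ⟨w, hw, h⟩ := ih hb k1 k4 hi
      exact ⟨true :: w, by simp [hw], h⟩
    · exact (no hb.ge k2 hi).elim
    · exact (no hc.le k2 hi).elim
    · exact (no ha.ge k3 hi).elim
    · exact (no hc.le k3 hi).elim

lemma edge_on_side23 {f : Pt → ℝ} (hf : Aff f) {n : ℕ} {a b c : Pt} (ha : 0 < f a)
    (hb : f b = 0) (hc : f c = 0) {e : Set Pt} (he : e ∈ ES n (a, b, c)) (h0 : ∀ P ∈ e, f P = 0) :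
    ∃ w : List Bool, w.length = n ∧ e = sube b c w := by
  rw [← ES_swap12, ← ES_swap23] at he
  exact edge_on_side12 hf hb hc ha he h0

/-! ### Fans of six triangles -/

/-- Six triangles `fanTri a b c p q r o` arranged cyclically (`a, p, b, q, c, r`) around `o`: there
are three lines through `o`, joining `c` to `p`, `a` to `q` and `b` to `r`, given by affine
functionals with the signs of the differences of barycentric coordinates in the case of a
barycentric subdivision. -/
structure Fan (a b c p q r o : Pt) (f g h : Pt → ℝ) : Prop where
  ff : Aff f
  fg : Aff g
  fh : Aff h
  fo : f o = 0
  go : g o = 0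
  ho : h o = 0
  fa : 0 < f a
  fb : f b < 0
  fc : f c = 0
  fp : f p = 0
  fq : f q < 0
  fr : 0 < f r
  ga : g a = 0
  gb : 0 < g b
  gc : g c < 0
  gp : 0 < g p
  gq : g q = 0
  gr : g r < 0
  ha : 0 < h a
  hb : h b = 0
  hc : h c < 0
  hp : 0 < h p
  hq : h q < 0
  hr : h r = 0
  det_ne : ∀ i, det (fanTri a b c p q r o i) ≠ 0

lemma no_common_edge {f : Pt → ℝ} (hf : Aff f) {n : ℕ} {v s v' s' o : Pt} (ho : f o = 0)
    (hv : 0 < f v) (hs : 0 < f s) (hv' : f v' ≤ 0) (hs' : f s' ≤ 0) {e : Set Pt}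
    (he : e ∈ ES n (v, s, o)) (he' : e ∈ ES n (v', s', o)) : False := by
  have h2 := nonneg_ES hf.neg (t := (v', s', o)) (by simpa using hv') (by simpa using hs')
    (by simp [ho]) he'
  have h1 := nonneg_ES hf (t := (v, s, o)) hv.le hs.le ho.ge he
  rw [← ES_swap23, ← ES_swap12] at he
  obtain ⟨P, hP, h⟩ := exists_ne_zero hf ho.ge hv hs he
  exact h (le_antisymm (by linarith [h2 P hP]) (h1 P hP))

lemma common_edge {f : Pt → ℝ} (hf : Aff f) {n : ℕ} {v v' s o : Pt} (ho : f o = 0)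
    (hs : f s = 0) (hv : 0 < f v) (hv' : f v' < 0) {F F' : Set Pt → ℝ}
    (hF : ∀ w : List Bool, w.length = n → F (sube s o w) = F' (sube s o w)) {e : Set Pt}
    (he : e ∈ ES n (v, s, o)) (he' : e ∈ ES n (v', s, o)) : F e = F' e := by
  have h2 := nonneg_ES hf.neg (t := (v', s, o)) (by simpa using hv'.le) (by simp [hs])
    (by simp [ho]) he'
  have h1 := nonneg_ES hf (t := (v, s, o)) hv.le hs.ge ho.ge he
  obtain ⟨w, hw, rfl⟩ := edge_on_side23 hf hv hs ho he
    fun P hP => le_antisymm (by linarith [h2 P hP]) (h1 P hP)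
  exact hF w hw

/-- Potentials on the six sectors which agree along the spokes have a common extension. -/
lemma Fan.glue {a b c p q r o : Pt} {f g h : Pt → ℝ} (H : Fan a b c p q r o f g h) {n : ℕ}
    (F : Fin 6 → Set Pt → ℝ)
    (hp : ∀ w : List Bool, w.length = n → F 0 (sube p o w) = F 1 (sube p o w))
    (hb : ∀ w : List Bool, w.length = n → F 1 (sube b o w) = F 2 (sube b o w))
    (hq : ∀ w : List Bool, w.length = n → F 2 (sube q o w) = F 3 (sube q o w))
    (hc : ∀ w : List Bool, w.length = n → F 3 (sube c o w) = F 5 (sube c o w))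
    (hr : ∀ w : List Bool, w.length = n → F 4 (sube r o w) = F 5 (sube r o w))
    (ha : ∀ w : List Bool, w.length = n → F 0 (sube a o w) = F 4 (sube a o w)) :
    ∃ G : Set Pt → ℝ, ∀ i, ∀ e ∈ ES n (fanTri a b c p q r o i), G e = F i e := by
  have key : ∀ i j, i < j → ∀ e, e ∈ ES n (fanTri a b c p q r o i) →
      e ∈ ES n (fanTri a b c p q r o j) → F i e = F j e := by
    intro i j hij e hi hj
    fin_cases i <;> fin_cases j <;> first | exact absurd hij (by decide) | skip
    · exact common_edge H.ff H.fo H.fp H.fa H.fb hp hi hj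
    · exact (no_common_edge H.fh H.ho H.ha H.hp H.hb.le H.hq.le hi hj).elim
    · exact (no_common_edge H.fh H.ho H.ha H.hp H.hc.le H.hq.le hi hj).elim
    · replace hi : e ∈ ES n (a, p, o) := hi
      replace hj : e ∈ ES n (a, r, o) := hj
      rw [← ES_swap12] at hi hj
      exact common_edge H.fg H.go H.ga H.gp H.gr ha hi hj
    · exact (no_common_edge H.fh H.ho H.ha H.hp H.hc.le H.hr.le hi hj).elim
    · replace hi : e ∈ ES n (b, p, o) := hi
      replace hj : e ∈ ES n (b, q, o) := hj
      rw [← ES_swap12] at hi hj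
      exact common_edge H.fh H.ho H.hb H.hp H.hq hb hi hj
    · exact (no_common_edge H.fg H.go H.gb H.gp H.gc.le H.gq.le hi hj).elim
    · exact (no_common_edge H.fg H.go H.gb H.gp H.ga.le H.gr.le hi hj).elim
    · exact (no_common_edge H.fg H.go H.gb H.gp H.gc.le H.gr.le hi hj).elim
    · exact common_edge H.fg H.go H.gq H.gb H.gc hq hi hj
    · exact (no_common_edge H.ff H.fo H.fa H.fr H.fb.le H.fq.le hj hi).elim
    · exact (no_common_edge H.ff.neg (neg_eq_zero.2 H.fo) (neg_pos.2 H.fb) (neg_pos.2 H.fq)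
        (neg_nonpos.2 H.fc.ge) (neg_nonpos.2 H.fr.le) hi hj).elim
    · exact (no_common_edge H.fh.neg (neg_eq_zero.2 H.ho) (neg_pos.2 H.hc) (neg_pos.2 H.hq)
        (neg_nonpos.2 H.ha.le) (neg_nonpos.2 H.hr.ge) hi hj).elim
    · replace hi : e ∈ ES n (c, q, o) := hi
      replace hj : e ∈ ES n (c, r, o) := hj
      rw [← ES_swap12] at hi hj
      exact (common_edge H.ff H.fo H.fc H.fr H.fq (fun w hw => (hc w hw).symm) hj hi).symm
    · exact common_edge H.fh H.ho H.hr H.ha H.hc hr hi hj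
  classical
  refine ⟨fun e => if he : ∃ i, e ∈ ES n (fanTri a b c p q r o i) then F he.choose e else 0, ?_⟩
  intro i e hi
  have he : ∃ i, e ∈ ES n (fanTri a b c p q r o i) := ⟨i, hi⟩
  simp only [dif_pos he]
  rcases lt_trichotomy he.choose i with h1 | h1 | h1
  · exact key _ _ h1 e he.choose_spec hi
  · rw [h1]
  · exact (key _ _ h1 e hi he.choose_spec).symm

/-- Distinct sectors of a fan have no triangle in common. -/
lemma Fan.disjoint {a b c p q r o : Pt} {f g h : Pt → ℝ} (H : Fan a b c p q r o f g h) (n : ℕ) :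
    Pairwise (Function.onFun Disjoint fun i => TS n (fanTri a b c p q r o i)) := by
  -- a line through `o` with the two sectors on different sides
  have sep : ∀ {k : Pt → ℝ}, Aff k → (∃ X, k X ≠ 0) → ∀ {t t' : Pt × Pt × Pt}, det t ≠ 0 →
      0 ≤ k t.1 → 0 ≤ k t.2.1 → 0 ≤ k t.2.2 → k t'.1 ≤ 0 → k t'.2.1 ≤ 0 → k t'.2.2 ≤ 0 →
      Disjoint (TS n t) (TS n t') := by
    intro k hk ⟨X, hX⟩ t t' ht h1 h2 h3 h4 h5 h6
    rw [Set.disjoint_left]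
    rintro _ ⟨u, hu, rfl⟩ ⟨u', hu', h7⟩
    obtain ⟨k1, k2, k3⟩ := nonneg_desc hk h1 h2 h3 hu
    obtain ⟨l1, l2, l3⟩ := nonneg_desc hk.neg (neg_nonneg.2 h4) (neg_nonneg.2 h5)
      (neg_nonneg.2 h6) hu'
    have hle : ∀ P ∈ vs u, k P ≤ 0 := by
      rw [← h7]
      rintro P (rfl | rfl | rfl) <;> linarith
    have z1 : k u.1 = 0 := le_antisymm (hle _ (by simp [vs])) k1
    have z2 : k u.2.1 = 0 := le_antisymm (hle _ (by simp [vs])) k2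
    have z3 : k u.2.2 = 0 := le_antisymm (hle _ (by simp [vs])) k3
    exact hX (hk.eq_zero (det_desc ht hu) z1 z2 z3 X)
  have key : ∀ i j, i < j →
      Disjoint (TS n (fanTri a b c p q r o i)) (TS n (fanTri a b c p q r o j)) := by
    obtain ⟨ff, fg, fh, fo, go, ho, fa, fb, fc, fp, fq, fr, ga, gb, gc, gp, gq, gr, ha, hb, hc, hp,
      hq, hr, hdet⟩ := H
    intro i j hij
    have sf := fun {t t'} => @sep f ff ⟨a, fa.ne'⟩ t t'
    have sg := fun {t t'} => @sep g fg ⟨b, gb.ne'⟩ t t'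
    have sh := fun {t t'} => @sep h fh ⟨a, ha.ne'⟩ t t'
    have di := hdet i
    have dj := hdet j
    fin_cases i <;> fin_cases j <;> first
      | exact absurd hij (by decide)
      | (refine sf di ?_ ?_ ?_ ?_ ?_ ?_ <;> simp [fanTri] <;> linarith)
      | (refine sg di ?_ ?_ ?_ ?_ ?_ ?_ <;> simp [fanTri] <;> linarith)
      | (refine sh di ?_ ?_ ?_ ?_ ?_ ?_ <;> simp [fanTri] <;> linarith)
      | (refine (sf dj ?_ ?_ ?_ ?_ ?_ ?_).symm <;> simp [fanTri] <;> linarith)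
  intro i j hij
  rcases lt_or_gt_of_ne hij with h1 | h1
  · exact key i j h1
  · exact (key j i h1).symm

/-- The children of a nondegenerate triangle form a fan. -/
lemma fan_kid {a b c : Pt} (hd : det (a, b, c) ≠ 0) :
    ∃ f g h, Fan a b c (mpt a b) (mpt b c) (mpt a c) (bary a b c) f g h := by
  -- barycentric coordinates
  obtain ⟨A, hA⟩ : ∃ A : Pt → ℝ, A = fun P => det (P, b, c) / det (a, b, c) := ⟨_, rfl⟩
  obtain ⟨B, hB⟩ : ∃ B : Pt → ℝ, B = fun P => det (a, P, c) / det (a, b, c) := ⟨_, rfl⟩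
  obtain ⟨C, hC⟩ : ∃ C : Pt → ℝ, C = fun P => det (a, b, P) / det (a, b, c) := ⟨_, rfl⟩
  have fA : Aff A := ⟨(b.2 - c.2) / det (a, b, c), (c.1 - b.1) / det (a, b, c),
    (b.1 * c.2 - b.2 * c.1) / det (a, b, c), fun P => by
      rw [hA]; simp only [det]; ring⟩
  have fB : Aff B := ⟨(c.2 - a.2) / det (a, b, c), (a.1 - c.1) / det (a, b, c),
    (c.1 * a.2 - c.2 * a.1) / det (a, b, c), fun P => by
      rw [hB]; simp only [det]; ring⟩
  have fC : Aff C := ⟨(a.2 - b.2) / det (a, b, c), (b.1 - a.1) / det (a, b, c),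
    (a.1 * b.2 - a.2 * b.1) / det (a, b, c), fun P => by
      rw [hC]; simp only [det]; ring⟩
  have Aa : A a = 1 := by rw [hA]; exact div_self hd
  have Bb : B b = 1 := by rw [hB]; exact div_self hd
  have Cc : C c = 1 := by rw [hC]; exact div_self hd
  have Ab : A b = 0 := by rw [hA]; simp [det]
  have Ac : A c = 0 := by rw [hA]; simp only [det]; ring
  have Ba : B a = 0 := by rw [hB]; simp [det]
  have Bc : B c = 0 := by rw [hB]; simp only [det]; ring
  have Ca : C a = 0 := by rw [hC]; simp [det]
  have Cb : C b = 0 := by rw [hC]; simp only [det]; ring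
  have sub : ∀ {X Y : Pt → ℝ}, Aff X → Aff Y → Aff fun P => X P - Y P := by
    rintro X Y ⟨x1, x2, x3, hx⟩ ⟨y1, y2, y3, hy⟩
    exact ⟨x1 - y1, x2 - y2, x3 - y3, fun P => by
      change X P - Y P = _
      rw [hx, hy]
      ring⟩
  refine ⟨_, _, _, sub fA fB, sub fB fC, sub fA fC, ?_, ?_, ?_, ?_, ?_, ?_, ?_, ?_, ?_, ?_, ?_, ?_,
    ?_, ?_, ?_, ?_, ?_, ?_, ?_, ?_, ?_, det_kid_ne hd⟩ <;>
    norm_num [fA.mpt, fA.bary, fB.mpt, fB.bary, fC.mpt, fC.bary, Aa, Ab, Ac, Ba, Bb, Bc, Ca, Cb, Cc]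

/-! ### Potentials on the edges of a subdivision -/

/-- The sum of `φ` over the triangles of the `n`-fold subdivision of `t`. -/
def RS (φ : Pt × Pt × Pt → ℝ) : ℕ → Pt × Pt × Pt → ℝ
  | 0, t => φ t
  | n + 1, t => ∑ i, RS φ n (kid t i)

/-- The energy of the star in the triangle `t` with the potential `F` on the edges of `t`. -/
def edgeQ (F : Set Pt → ℝ) (t : Pt × Pt × Pt) : ℝ :=
  Q (F {t.1, t.2.1}) (F {t.2.1, t.2.2}) (F {t.1, t.2.2})

lemma RS_mono {φ ψ : Pt × Pt × Pt → ℝ} {n : ℕ} {t : Pt × Pt × Pt}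
    (h : ∀ u ∈ desc n t, φ u ≤ ψ u) : RS φ n t ≤ RS ψ n t := by
  induction n generalizing t with
  | zero => exact h t rfl
  | succ n ih =>
    exact Finset.sum_le_sum fun i _ => ih fun u hu => h u (Set.mem_iUnion.2 ⟨i, hu⟩)

lemma RS_congr {φ ψ : Pt × Pt × Pt → ℝ} {n : ℕ} {t : Pt × Pt × Pt}
    (h : ∀ u ∈ desc n t, φ u = ψ u) : RS φ n t = RS ψ n t :=
  le_antisymm (RS_mono fun u hu => (h u hu).le) (RS_mono fun u hu => (h u hu).ge)

lemma RS_edgeQ_congr {F G : Set Pt → ℝ} {n : ℕ} {t : Pt × Pt × Pt}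
    (h : ∀ e ∈ ES n t, F e = G e) : RS (edgeQ F) n t = RS (edgeQ G) n t := by
  refine RS_congr fun u hu => ?_
  unfold edgeQ
  rw [h _ ⟨u, hu, .inl rfl⟩, h _ ⟨u, hu, .inr (.inl rfl)⟩, h _ ⟨u, hu, .inr (.inr rfl)⟩]

lemma RS_eq_finsum (φ : Set Pt → ℝ) {n : ℕ} {t : Pt × Pt × Pt} (ht : det t ≠ 0) :
    RS (fun u => φ (vs u)) n t = ∑ᶠ s ∈ TS n t, φ s := by
  induction n generalizing t with
  | zero => simp [RS, TS, desc]
  | succ n ih =>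
    obtain ⟨f, g, h, H⟩ := fan_kid (a := t.1) (b := t.2.1) (c := t.2.2) ht
    rw [TS_succ, finsum_mem_iUnion (t := fun i => TS n (kid t i)) (H.disjoint n)
      fun i => TS_finite _ _, finsum_eq_sum_of_fintype]
    exact Finset.sum_congr rfl fun i _ => ih (det_kid_ne ht i)

/-- The traces of a potential. -/
lemma adm_of_potential (F : Set Pt → ℝ) (n : ℕ) (a b c : Pt) :
    Adm n (fun w => F (sube a b w)) (fun w => F (sube b c w)) (fun w => F (sube a c w))
      (RS (edgeQ F) n (a, b, c)) := by
  induction n generalizing a b c with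
  | zero => exact le_rfl
  | succ n ih =>
    refine ⟨_, _, _, _, _, _, _, _, _, _, _, _, ih a (mpt a b) (bary a b c),
      ih b (mpt a b) (bary a b c), ih b (mpt b c) (bary a b c), ih c (mpt b c) (bary a b c),
      ih a (mpt a c) (bary a b c), ih c (mpt a c) (bary a b c), le_of_eq ?_⟩
    simp only [RS, Fin.sum_univ_six]
    rfl

/-- Every pair in `Adm n` comes from a potential on the given triangle. -/
def Realizable (n : ℕ) : Prop := ∀ {a b c : Pt} {x y z : Tr} {e : ℝ}, det (a, b, c) ≠ 0 →
  Adm n x y z e → ∃ F : Set Pt → ℝ, RS (edgeQ F) n (a, b, c) ≤ e ∧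
    ∀ w : List Bool, w.length = n →
      F (sube a b w) = x w ∧ F (sube b c w) = y w ∧ F (sube a c w) = z w

lemma Fan.realize {a b c p q r o : Pt} {f g h : Pt → ℝ} (H : Fan a b c p q r o f g h) {n : ℕ}
    (R : Realizable n) {x y z : Tr} {e : ℝ} (hA : Adm (n + 1) x y z e) :
    ∃ G : Set Pt → ℝ, ∑ i, RS (edgeQ G) n (fanTri a b c p q r o i) ≤ e ∧
      ∀ w : List Bool, w.length = n →
        G (sube a p w) = x (false :: w) ∧ G (sube b p w) = x (true :: w) ∧
        G (sube b q w) = y (false :: w) ∧ G (sube c q w) = y (true :: w) ∧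
        G (sube a r w) = z (false :: w) ∧ G (sube c r w) = z (true :: w) := by
  obtain ⟨ua, ub, uc, vp, vq, vr, e0, e1, e2, e3, e4, e5, h0, h1, h2, h3, h4, h5, hs⟩ := hA
  obtain ⟨F0, E0, T0⟩ := R (H.det_ne 0) h0
  obtain ⟨F1, E1, T1⟩ := R (H.det_ne 1) h1
  obtain ⟨F2, E2, T2⟩ := R (H.det_ne 2) h2
  obtain ⟨F3, E3, T3⟩ := R (H.det_ne 3) h3
  obtain ⟨F4, E4, T4⟩ := R (H.det_ne 4) h4
  obtain ⟨F5, E5, T5⟩ := R (H.det_ne 5) h5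
  obtain ⟨G, hG⟩ := H.glue (n := n) ![F0, F1, F2, F3, F4, F5]
    (fun w hw => (T0 w hw).2.1.trans (T1 w hw).2.1.symm)
    (fun w hw => (T1 w hw).2.2.trans (T2 w hw).2.2.symm)
    (fun w hw => (T2 w hw).2.1.trans (T3 w hw).2.1.symm)
    (fun w hw => (T3 w hw).2.2.trans (T5 w hw).2.2.symm)
    (fun w hw => (T4 w hw).2.1.trans (T5 w hw).2.1.symm)
    (fun w hw => (T0 w hw).2.2.trans (T4 w hw).2.2.symm)
  refine ⟨G, ?_, fun w hw => ⟨?_, ?_, ?_, ?_, ?_, ?_⟩⟩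
  · rw [Finset.sum_congr rfl fun i _ => RS_edgeQ_congr (hG i), Fin.sum_univ_six]
    refine le_trans ?_ hs
    exact add_le_add (add_le_add (add_le_add (add_le_add (add_le_add E0 E1) E2) E3) E4) E5
  · exact (hG 0 _ (sube_mem_ES a p o hw)).trans (T0 w hw).1
  · exact (hG 1 _ (sube_mem_ES b p o hw)).trans (T1 w hw).1
  · exact (hG 2 _ (sube_mem_ES b q o hw)).trans (T2 w hw).1
  · exact (hG 3 _ (sube_mem_ES c q o hw)).trans (T3 w hw).1
  · exact (hG 4 _ (sube_mem_ES a r o hw)).trans (T4 w hw).1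
  · exact (hG 5 _ (sube_mem_ES c r o hw)).trans (T5 w hw).1

lemma pair_ne_left {a b c : Pt} (hac : a ≠ c) (hab : a ≠ b) : ({a, b} : Set Pt) ≠ {b, c} := by
  intro h
  have : a ∈ ({b, c} : Set Pt) := h ▸ (by simp)
  rcases this with h | h
  · exact hab h
  · exact hac h

lemma realizable (n : ℕ) : Realizable n := by
  induction n with
  | zero =>
    intro a b c x y z e hd hA
    obtain ⟨h1, h2, h3⟩ := ne_of_det hd
    simp only at h1 h2 h3
    have n1 : ({b, c} : Set Pt) ≠ {a, b} := (pair_ne_left h3 h1).symm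
    have n2 : ({a, c} : Set Pt) ≠ {a, b} := by
      rw [Set.pair_comm a c]
      exact pair_ne_left h2.symm h3.symm
    have n3 : ({a, c} : Set Pt) ≠ {b, c} := by
      rw [Set.pair_comm b c]
      exact pair_ne_left h1 h3
    classical
    obtain ⟨F, hF⟩ : ∃ F : Set Pt → ℝ, F = fun s =>
      if s = {a, b} then x [] else if s = {b, c} then y [] else z [] := ⟨_, rfl⟩
    have k1 : F {a, b} = x [] := by simp [hF]
    have k2 : F {b, c} = y [] := by simp [hF, n1]
    have k3 : F {a, c} = z [] := by simp [hF, n2, n3]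
    refine ⟨F, ?_, fun w hw => ?_⟩
    · simp only [RS, edgeQ, k1, k2, k3]
      exact hA
    · obtain rfl := List.eq_nil_of_length_eq_zero hw
      exact ⟨k1, k2, k3⟩
  | succ n ih =>
    intro a b c x y z e hd hA
    obtain ⟨f, g, h, H⟩ := fan_kid hd
    obtain ⟨G, hE, hT⟩ := H.realize ih hA
    refine ⟨G, hE, fun w hw => ?_⟩
    match w, hw with
    | false :: w, hw =>
      obtain ⟨h1, h2, h3, h4, h5, h6⟩ := hT w (by simpa using hw)
      exact ⟨h1, h3, h5⟩
    | true :: w, hw =>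
      obtain ⟨h1, h2, h3, h4, h5, h6⟩ := hT w (by simpa using hw)
      refine ⟨h2, ?_, ?_⟩
      · exact h4
      · exact h6

/-! ### The hexagon -/

lemma hc0 : hexCorner 0 = (1, 0) := by simp [hexCorner]

lemma hc1 : hexCorner 1 = (1 / 2, √3 / 2) := by simp [hexCorner]

lemma hc2 : hexCorner 2 = (-1 / 2, √3 / 2) := by
  have h : ((2 : ℕ) : ℝ) * (Real.pi / 3) = Real.pi - Real.pi / 3 := by push_cast; ring
  simp only [hexCorner, h, Real.cos_pi_sub, Real.sin_pi_sub, Real.cos_pi_div_three,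
    Real.sin_pi_div_three, neg_div]

lemma hc3 : hexCorner 3 = (-1, 0) := by
  have h : ((3 : ℕ) : ℝ) * (Real.pi / 3) = Real.pi := by push_cast; ring
  simp only [hexCorner, h, Real.cos_pi, Real.sin_pi]

lemma hc4 : hexCorner 4 = (-1 / 2, -√3 / 2) := by
  have h : ((4 : ℕ) : ℝ) * (Real.pi / 3) = Real.pi / 3 + Real.pi := by push_cast; ring
  simp only [hexCorner, h, Real.cos_add_pi, Real.sin_add_pi, Real.cos_pi_div_three,
    Real.sin_pi_div_three, neg_div]

lemma hc5 : hexCorner 5 = (1 / 2, -√3 / 2) := by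
  have h : ((5 : ℕ) : ℝ) * (Real.pi / 3) = 2 * Real.pi - Real.pi / 3 := by push_cast; ring
  simp only [hexCorner, h, Real.cos_two_pi_sub, Real.sin_two_pi_sub, Real.cos_pi_div_three,
    Real.sin_pi_div_three, neg_div]

lemma hc6 : hexCorner 6 = hexCorner 0 := by
  have h : ((6 : ℕ) : ℝ) * (Real.pi / 3) = 2 * Real.pi := by push_cast; ring
  simp only [hexCorner, h, Real.cos_two_pi, Real.sin_two_pi]
  simp

/-- The six sectors of the hexagon as a fan. -/
def hexTri : Fin 6 → Pt × Pt × Pt :=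
  fanTri (hexCorner 0) (hexCorner 2) (hexCorner 4) (hexCorner 1) (hexCorner 3) (hexCorner 5) (0, 0)

lemma hexFan : ∃ f g h, Fan (hexCorner 0) (hexCorner 2) (hexCorner 4) (hexCorner 1) (hexCorner 3)
    (hexCorner 5) (0, 0) f g h := by
  have h3 : 0 < √3 := by positivity
  refine ⟨fun P => √3 * P.1 - P.2, fun P => P.2, fun P => √3 * P.1 + P.2,
    ⟨√3, -1, 0, fun P => by ring⟩, ⟨0, 1, 0, fun P => by ring⟩, ⟨√3, 1, 0, fun P => by ring⟩,
    ?_, ?_, ?_, ?_, ?_, ?_, ?_, ?_, ?_, ?_, ?_, ?_, ?_, ?_, ?_, ?_, ?_, ?_, ?_, ?_, ?_, ?_⟩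
  all_goals try simp only [hc0, hc1, hc2, hc3, hc4, hc5]
  all_goals try linarith
  intro i
  have h4 := h3.ne'
  fin_cases i <;> simp [fanTri, det] <;> intro h <;> apply h4 <;> linarith

lemma det_hexTri (i : Fin 6) : det (hexTri i) ≠ 0 := by
  obtain ⟨f, g, h, H⟩ := hexFan
  exact H.det_ne i

lemma TriSet_one : TriSet 1 = {(hexCorner 0, hexCorner 1, (0, 0)),
    (hexCorner 1, hexCorner 2, (0, 0)), (hexCorner 2, hexCorner 3, (0, 0)),
    (hexCorner 3, hexCorner 4, (0, 0)), (hexCorner 4, hexCorner 5, (0, 0)),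
    (hexCorner 5, hexCorner 0, (0, 0))} := by
  ext s
  simp [TriSet, Fin.exists_fin_succ, hc6]

lemma Simp2_eq (n : ℕ) : Simp2 (n + 1) = ⋃ i, TS n (hexTri i) := by
  have h : Simp2 (n + 1) = ⋃ t ∈ TriSet 1, TS n t := by
    ext s
    simp only [Simp2, TriSet_eq n, TS, vs, Set.mem_iUnion, Set.mem_image, Set.mem_ofPred_eq]
    constructor
    · rintro ⟨u, ⟨t, ht, hu⟩, rfl⟩
      exact ⟨t, ht, u, hu, rfl⟩
    · rintro ⟨t, ht, u, hu, rfl⟩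
      exact ⟨u, ⟨t, ht, hu⟩, rfl⟩
  rw [h, TriSet_one]
  ext s
  simp only [Set.mem_iUnion, hexTri, fanTri, Fin.exists_fin_succ, Set.mem_insert_iff,
    Set.mem_singleton_iff, exists_prop, exists_eq_or_imp, exists_eq_left]
  simp [TS_swap12 n (hexCorner 1) (hexCorner 2), TS_swap12 n (hexCorner 3) (hexCorner 4),
    TS_swap12 n (hexCorner 5) (hexCorner 0)]
  tauto

lemma Simp1_eq (n : ℕ) : Simp1 (n + 1) = ⋃ i, ES n (hexTri i) := by
  have h : Simp1 (n + 1) = ⋃ t ∈ TriSet 1, ES n t := by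
    ext s
    simp only [Simp1, TriSet_eq n, ES, Set.mem_iUnion, Set.mem_ofPred_eq]
    constructor
    · rintro ⟨u, ⟨t, ht, hu⟩, h⟩
      exact ⟨t, ht, u, hu, h⟩
    · rintro ⟨t, ht, u, hu, h⟩
      exact ⟨u, ⟨t, ht, hu⟩, h⟩
  rw [h, TriSet_one]
  ext s
  simp only [Set.mem_iUnion, hexTri, fanTri, Fin.exists_fin_succ, Set.mem_insert_iff,
    Set.mem_singleton_iff, exists_prop, exists_eq_or_imp, exists_eq_left]
  simp [ES_swap12 n (hexCorner 1) (hexCorner 2), ES_swap12 n (hexCorner 3) (hexCorner 4),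
    ES_swap12 n (hexCorner 5) (hexCorner 0)]
  tauto

lemma pair_of_mem_Simp1 {n : ℕ} {e : Set Pt} (he : e ∈ Simp1 (n + 1)) :
    ∃ P R, P ≠ R ∧ e = {P, R} := by
  rw [Simp1_eq, Set.mem_iUnion] at he
  obtain ⟨i, u, hu, h⟩ := he
  obtain ⟨h1, h2, h3⟩ := ne_of_det (det_desc (det_hexTri i) hu)
  rcases h with h | h | h
  exacts [⟨_, _, h1, h⟩, ⟨_, _, h2, h⟩, ⟨_, _, h3, h⟩]

lemma Simp1_disjoint_Simp2 (n : ℕ) {e : Set Pt} (he : e ∈ Simp1 (n + 1)) :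
    e ∉ Simp2 (n + 1) := by
  intro h
  obtain ⟨P, R, hPR, rfl⟩ := pair_of_mem_Simp1 he
  rw [Simp2_eq, Set.mem_iUnion] at h
  obtain ⟨i, u, hu, h⟩ := h
  obtain ⟨h1, h2, h3⟩ := ne_of_det (det_desc (det_hexTri i) hu)
  have k1 := Set.ncard_pair hPR
  have k2 : ({P, R} : Set Pt).ncard = 3 := Set.ncard_eq_three.2 ⟨_, _, _, h1, h3, h2, h.symm⟩
  omega

/-! ### The energy of a potential on the hexacarpet graph -/

/-- The energy of `f` on the star around the triangle `s`. -/
def star (n : ℕ) (f : Set Pt → ℝ) (s : Set Pt) : ℝ :=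
  ∑ᶠ e ∈ {e ∈ Simp1 n | e ⊆ s}, 1 / 2 * (f s - f e) ^ 2

lemma Simp2_finite (n : ℕ) : (Simp2 (n + 1)).Finite := by
  rw [Simp2_eq]; exact Set.finite_iUnion fun i => TS_finite _ _

lemma Simp1_finite (n : ℕ) : (Simp1 (n + 1)).Finite := by
  rw [Simp1_eq]; exact Set.finite_iUnion fun i => ES_finite _ _

lemma energy_eq_stars (n : ℕ) (f : Set Pt → ℝ) :
    energy (cH (n + 1)) f = ∑ᶠ s ∈ Simp2 (n + 1), star (n + 1) f s := by
  classical
  have f1 := Simp1_finite n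
  have f2 := Simp2_finite n
  set S1 := Simp1 (n + 1) with hS1
  set S2 := Simp2 (n + 1) with hS2
  obtain ⟨T, hT⟩ : ∃ T : Finset (Set Pt), ∀ u, u ∈ T ↔ u ∈ S1 ∨ u ∈ S2 :=
    ⟨(f1.union f2).toFinset, fun u => by simp⟩
  -- one half of the double sum: the edge comes first, the triangle second
  obtain ⟨g, hg⟩ : ∃ g : Set Pt → Set Pt → ℝ, g = fun e s =>
    if e ∈ S1 ∧ s ∈ S2 ∧ e ⊆ s then 1 / 2 * (f s - f e) ^ 2 else 0 := ⟨_, rfl⟩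
  have hc : ∀ p q, cH (n + 1) p q * (f p - f q) ^ 2 = g p q + g q p := by
    intro p q
    rw [hg]
    unfold cH
    by_cases h1 : p ∈ S1 ∧ q ∈ S2 ∧ p ⊆ q
    · have h2 : ¬ (q ∈ S1 ∧ p ∈ S2 ∧ q ⊆ p) := fun h => Simp1_disjoint_Simp2 n h1.1 h.2.1
      simp only [← hS1, ← hS2, h1, h2, and_self, true_or, if_true, if_false]
      ring
    · by_cases h2 : q ∈ S1 ∧ p ∈ S2 ∧ q ⊆ p
      · simp only [← hS1, ← hS2, h1, h2, and_self, or_true, if_true, if_false]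
        ring
      · simp only [← hS1, ← hS2, h1, h2, or_self, if_false]
        ring
  have hg0 : ∀ p q, (p ∉ T ∨ q ∉ T) → g p q = 0 := by
    intro p q h
    rw [hg]
    refine if_neg fun h1 => ?_
    rcases h with h | h
    · exact h ((hT p).2 (.inl h1.1))
    · exact h ((hT q).2 (.inr h1.2.1))
  have h1 : ∀ p, ∑' q, cH (n + 1) p q * (f p - f q) ^ 2 = ∑ q ∈ T, (g p q + g q p) := by
    intro p
    simp only [hc]
    exact tsum_eq_sum fun q hq => by rw [hg0 p q (.inr hq), hg0 q p (.inl hq), add_zero]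
  have h2 : energy (cH (n + 1)) f = ∑ s ∈ T, ∑ e ∈ T, g e s := by
    unfold energy
    simp only [h1]
    rw [tsum_eq_sum (s := T) fun p hp => Finset.sum_eq_zero fun q _ => by
      rw [hg0 p q (.inl hp), hg0 q p (.inr hp), add_zero]]
    simp only [Finset.sum_add_distrib]
    rw [Finset.sum_comm (f := fun p q => g p q)]
    ring
  rw [h2, finsum_mem_eq_finite_toFinset_sum _ f2]
  rw [← Finset.sum_subset (s₁ := f2.toFinset) (s₂ := T)
    (fun s hs => (hT s).2 (.inr (f2.mem_toFinset.1 hs)))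
    (fun s _ hs => Finset.sum_eq_zero fun e _ => by
      rw [hg]
      exact if_neg fun h => hs (f2.mem_toFinset.2 h.2.1))]
  refine Finset.sum_congr rfl fun s hs => ?_
  have hs := f2.mem_toFinset.1 hs
  have f3 : {e ∈ S1 | e ⊆ s}.Finite := f1.subset fun e he => he.1
  unfold star
  rw [← hS1, finsum_mem_eq_finite_toFinset_sum _ f3]
  rw [← Finset.sum_subset (s₁ := f3.toFinset) (s₂ := T)
    (fun e he => (hT e).2 (.inl (f3.mem_toFinset.1 he).1))
    (fun e _ he => by
      rw [hg]
      exact if_neg fun h => he (f3.mem_toFinset.2 ⟨h.1, h.2.2⟩))]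
  refine Finset.sum_congr rfl fun e he => ?_
  have he := f3.mem_toFinset.1 he
  rw [hg]
  exact if_pos ⟨he.1, hs, he.2⟩

lemma edges_of_triangle {n : ℕ} {i : Fin 6} {u : Pt × Pt × Pt} (hu : u ∈ desc n (hexTri i)) :
    {e ∈ Simp1 (n + 1) | e ⊆ vs u} = {{u.1, u.2.1}, {u.2.1, u.2.2}, {u.1, u.2.2}} := by
  ext e
  constructor
  · rintro ⟨he, hs⟩
    obtain ⟨P, R, hPR, rfl⟩ := pair_of_mem_Simp1 he
    have hP : P ∈ vs u := hs (by simp)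
    have hR : R ∈ vs u := hs (by simp)
    rcases hP with rfl | rfl | rfl <;> rcases hR with rfl | rfl | rfl <;>
      first | exact absurd rfl hPR | simp [Set.pair_comm]
  · intro h
    refine ⟨?_, ?_⟩
    · rw [Simp1_eq, Set.mem_iUnion]
      exact ⟨i, u, hu, h⟩
    · rcases h with rfl | rfl | rfl <;> intro P hP <;> rcases hP with rfl | rfl <;> simp [vs]

lemma edges_ne {a b c : Pt} (h1 : a ≠ b) (h2 : b ≠ c) (h3 : a ≠ c) :
    ({a, b} : Set Pt) ≠ {b, c} ∧ ({a, b} : Set Pt) ≠ {a, c} ∧ ({b, c} : Set Pt) ≠ {a, c} := by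
  refine ⟨pair_ne_left h3 h1, ?_, ?_⟩
  · rw [Set.pair_comm a b]
    exact pair_ne_left h2 h1.symm
  · rw [Set.pair_comm a c]
    exact pair_ne_left h1.symm h2

lemma star_vs {n : ℕ} {i : Fin 6} {u : Pt × Pt × Pt} (hu : u ∈ desc n (hexTri i))
    (f : Set Pt → ℝ) :
    star (n + 1) f (vs u) = edgeQ f u +
      3 / 2 * (f (vs u) - (f {u.1, u.2.1} + f {u.2.1, u.2.2} + f {u.1, u.2.2}) / 3) ^ 2 := by
  obtain ⟨h1, h2, h3⟩ := ne_of_det (det_desc (det_hexTri i) hu)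
  obtain ⟨n1, n2, n3⟩ := edges_ne h1 h2 h3
  unfold star
  rw [edges_of_triangle hu, finsum_mem_insert _ (by simp [n1, n2]) (Set.toFinite _),
    finsum_mem_pair n3]
  unfold edgeQ Q
  ring

lemma energy_eq_RS (n : ℕ) (f : Set Pt → ℝ) :
    energy (cH (n + 1)) f = ∑ i, RS (fun u => star (n + 1) f (vs u)) n (hexTri i) := by
  obtain ⟨g1, g2, g3, H⟩ := hexFan
  rw [energy_eq_stars, Simp2_eq, finsum_mem_iUnion (t := fun i => TS n (hexTri i)) (H.disjoint n)
    (fun i => TS_finite _ _), finsum_eq_sum_of_fintype]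
  exact Finset.sum_congr rfl fun i _ => (RS_eq_finsum _ (det_hexTri i)).symm

lemma energy_ge (n : ℕ) (f : Set Pt → ℝ) :
    ∑ i, RS (edgeQ f) n (hexTri i) ≤ energy (cH (n + 1)) f := by
  rw [energy_eq_RS]
  refine Finset.sum_le_sum fun i _ => RS_mono fun u hu => ?_
  rw [star_vs hu]
  exact le_add_of_nonneg_right (by positivity)

/-- A potential on the edges extends to the triangles so that every star has minimal energy. -/
lemma exists_energy_eq (n : ℕ) (G : Set Pt → ℝ) : ∃ f : Set Pt → ℝ,
    (∀ e ∈ Simp1 (n + 1), f e = G e) ∧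
      energy (cH (n + 1)) f = ∑ i, RS (edgeQ G) n (hexTri i) := by
  classical
  obtain ⟨f, hf⟩ : ∃ f : Set Pt → ℝ, f = fun s =>
    if s ∈ Simp2 (n + 1) then (∑ᶠ e ∈ {e ∈ Simp1 (n + 1) | e ⊆ s}, G e) / 3 else G s := ⟨_, rfl⟩
  have h1 : ∀ e ∈ Simp1 (n + 1), f e = G e := by
    intro e he
    rw [hf]
    exact if_neg (Simp1_disjoint_Simp2 n he)
  refine ⟨f, h1, ?_⟩
  rw [energy_eq_RS]
  refine Finset.sum_congr rfl fun i _ => RS_congr fun u hu => ?_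
  have hm : ∀ e, e = {u.1, u.2.1} ∨ e = {u.2.1, u.2.2} ∨ e = {u.1, u.2.2} → f e = G e := by
    intro e he
    apply h1
    rw [Simp1_eq, Set.mem_iUnion]
    exact ⟨i, u, hu, he⟩
  have hs : vs u ∈ Simp2 (n + 1) := by
    rw [Simp2_eq, Set.mem_iUnion]
    exact ⟨i, u, hu, rfl⟩
  obtain ⟨k1, k2, k3⟩ := ne_of_det (det_desc (det_hexTri i) hu)
  have hv : f (vs u) = (G {u.1, u.2.1} + G {u.2.1, u.2.2} + G {u.1, u.2.2}) / 3 := by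
    obtain ⟨n1, n2, n3⟩ := edges_ne k1 k2 k3
    rw [hf]
    simp only [if_pos hs]
    rw [edges_of_triangle hu, finsum_mem_insert _ (by simp [n1, n2]) (Set.toFinite _),
      finsum_mem_pair n3]
    ring
  rw [star_vs hu, hv]
  unfold edgeQ
  rw [hm _ (.inl rfl), hm _ (.inr (.inl rfl)), hm _ (.inr (.inr rfl))]
  ring

/-! ### Boundary values and the effective conductance -/

lemma Aff.zero_of_segment {f : Pt → ℝ} (hf : Aff f) {a b P : Pt} (ha : f a = 0) (hb : f b = 0)
    (hP : P ∈ segment ℝ a b) : f P = 0 := by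
  obtain ⟨A, B, C, h⟩ := hf
  obtain ⟨s, t, -, -, hst, rfl⟩ := hP
  rw [h] at ha hb ⊢
  simp only [Prod.fst_add, Prod.snd_add, Prod.smul_fst, Prod.smul_snd, smul_eq_mul]
  linear_combination s * ha + t * hb - C * hst

lemma mpt_mem_segment (a b : Pt) : mpt a b ∈ segment ℝ a b :=
  ⟨2⁻¹, 2⁻¹, by norm_num, by norm_num, by norm_num, by rw [mpt, smul_add]⟩

lemma sube_subset_segment (a b : Pt) (w : List Bool) : sube a b w ⊆ segment ℝ a b := by
  induction w generalizing a b with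
  | nil =>
    rintro P (rfl | rfl)
    · exact left_mem_segment ℝ _ _
    · exact right_mem_segment ℝ _ _
  | cons t w ih =>
    have hm := mpt_mem_segment a b
    cases t
    · exact (ih a (mpt a b)).trans
        ((convex_segment a b).segment_subset (left_mem_segment ℝ a b) hm)
    · exact (ih b (mpt a b)).trans
        ((convex_segment a b).segment_subset (right_mem_segment ℝ a b) hm)

lemma sube_mem_LsetH {n k : ℕ} {i : Fin 6} {a b c : Pt} {w : List Bool} (ht : hexTri i = (a, b, c))
    (hw : w.length = n) (hs : segment ℝ a b = hexSide k) : sube a b w ∈ LsetH (n + 1) k := by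
  refine ⟨.inr ?_, ?_⟩
  · rw [Simp1_eq, Set.mem_iUnion]
    exact ⟨i, ht ▸ sube_mem_ES a b c hw⟩
  · rw [← hs]
    exact convexHull_min (sube_subset_segment a b w) (convex_segment a b)

/-- An edge of a sector lying on a supporting line away from the centre is a piece of the
outer side of the sector. -/
lemma sector_edge {k : Pt → ℝ} (hk : Aff k) {n : ℕ} {v s o : Pt} (hv : 0 ≤ k v) (hs : 0 ≤ k s)
    (ho : 0 < k o) {e : Set Pt} (he : e ∈ ES n (v, s, o)) (h0 : ∀ P ∈ e, k P = 0) :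
    k v = 0 ∧ k s = 0 ∧ ∃ w : List Bool, w.length = n ∧ e = sube v s w := by
  have v0 : k v = 0 := by
    by_contra h
    rw [← ES_swap12] at he
    obtain ⟨P, hP, h1⟩ := exists_ne_zero hk hs (lt_of_le_of_ne hv (Ne.symm h)) ho he
    exact h1 (h0 P hP)
  have s0 : k s = 0 := by
    by_contra h
    obtain ⟨P, hP, h1⟩ := exists_ne_zero hk hv (lt_of_le_of_ne hs (Ne.symm h)) ho he
    exact h1 (h0 P hP)
  exact ⟨v0, s0, edge_on_side12 hk v0 s0 ho he h0⟩

/-- The vertices of the graph on a side of the hexagon are edges, and lie on pieces of the outer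
sides of the sectors.  Here `k` is a functional that vanishes on that side and is positive at the
centre. -/
lemma mem_LsetH {k : Pt → ℝ} (hk : Aff k) {n j : ℕ} (h1 : k (hexCorner j) = 0)
    (h2 : k (hexCorner (j + 1)) = 0) (h3 : ∀ i, 0 ≤ k (hexTri i).1 ∧ 0 ≤ k (hexTri i).2.1)
    (h4 : 0 < k (0, 0)) {v : Set Pt} (hv : v ∈ LsetH (n + 1) j) :
    v ∈ Simp1 (n + 1) ∧ ∃ i, k (hexTri i).1 = 0 ∧ k (hexTri i).2.1 = 0 ∧
      ∃ w : List Bool, w.length = n ∧ v = sube (hexTri i).1 (hexTri i).2.1 w := by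
  obtain ⟨hv, hc⟩ := hv
  have h0 : ∀ P ∈ v, k P = 0 := fun P hP =>
    hk.zero_of_segment h1 h2 (hc (subset_convexHull ℝ v hP))
  have hv1 : v ∈ Simp1 (n + 1) := by
    refine hv.resolve_left fun h => ?_
    rw [Simp2_eq, Set.mem_iUnion] at h
    obtain ⟨i, u, hu, rfl⟩ := h
    exact h4.ne' (hk.eq_zero (det_desc (det_hexTri i) hu) (h0 _ (by simp [vs]))
      (h0 _ (by simp [vs])) (h0 _ (by simp [vs])) _)
  refine ⟨hv1, ?_⟩
  rw [Simp1_eq, Set.mem_iUnion] at hv1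
  obtain ⟨i, hi⟩ := hv1
  have ho : (hexTri i).2.2 = (0, 0) := by fin_cases i <;> rfl
  have ho' : 0 < k (hexTri i).2.2 := ho ▸ h4
  exact ⟨i, sector_edge hk (h3 i).1 (h3 i).2 ho' hi h0⟩

lemma forall_corner {p : Pt → Prop} (h0 : p (hexCorner 0)) (h1 : p (hexCorner 1))
    (h2 : p (hexCorner 2)) (h3 : p (hexCorner 3)) (h4 : p (hexCorner 4)) (h5 : p (hexCorner 5))
    (i : Fin 6) : p (hexTri i).1 ∧ p (hexTri i).2.1 := by
  fin_cases i <;> exact ⟨by assumption, by assumption⟩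

lemma LsetH_zero {n : ℕ} {v : Set Pt} (hv : v ∈ LsetH (n + 1) 0) : v ∈ Simp1 (n + 1) ∧
    ∃ w : List Bool, w.length = n ∧ v = sube (hexCorner 0) (hexCorner 1) w := by
  have h3 : 0 < √3 := by positivity
  obtain ⟨hs, i, k1, k2, h⟩ := mem_LsetH (k := fun P => √3 - √3 * P.1 - P.2)
    ⟨-√3, -1, √3, fun P => by ring⟩ (by simp only [hc0]; ring) (by simp only [zero_add, hc1]; ring)
    (forall_corner (p := fun P => 0 ≤ √3 - √3 * P.1 - P.2) (by simp only [hc0]; linarith)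
      (by simp only [hc1]; linarith) (by simp only [hc2]; linarith) (by simp only [hc3]; linarith)
      (by simp only [hc4]; linarith) (by simp only [hc5]; linarith)) (by simp) hv
  refine ⟨hs, ?_⟩
  fin_cases i <;> first
    | exact h
    | (simp [hexTri, fanTri, hc0, hc1, hc2, hc3, hc4, hc5] at k1 k2 <;> linarith)

lemma LsetH_one {n : ℕ} {v : Set Pt} (hv : v ∈ LsetH (n + 1) 1) : v ∈ Simp1 (n + 1) ∧
    ∃ w : List Bool, w.length = n ∧ v = sube (hexCorner 2) (hexCorner 1) w := by
  have h3 : 0 < √3 := by positivity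
  obtain ⟨hs, i, k1, k2, h⟩ := mem_LsetH (k := fun P => √3 / 2 - P.2)
    ⟨0, -1, √3 / 2, fun P => by ring⟩ (by simp only [hc1]; ring)
    (by simp only [Nat.reduceAdd, hc2]; ring)
    (forall_corner (p := fun P => 0 ≤ √3 / 2 - P.2) (by simp only [hc0]; linarith)
      (by simp only [hc1]; linarith) (by simp only [hc2]; linarith) (by simp only [hc3]; linarith)
      (by simp only [hc4]; linarith) (by simp only [hc5]; linarith)) (by simp) hv
  refine ⟨hs, ?_⟩
  fin_cases i <;> first
    | exact h
    | (simp [hexTri, fanTri, hc0, hc1, hc2, hc3, hc4, hc5] at k1 k2 <;> linarith)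

lemma LsetH_three {n : ℕ} {v : Set Pt} (hv : v ∈ LsetH (n + 1) 3) : v ∈ Simp1 (n + 1) ∧
    ∃ w : List Bool, w.length = n ∧ v = sube (hexCorner 4) (hexCorner 3) w := by
  have h3 : 0 < √3 := by positivity
  obtain ⟨hs, i, k1, k2, h⟩ := mem_LsetH (k := fun P => √3 + √3 * P.1 + P.2)
    ⟨√3, 1, √3, fun P => by ring⟩ (by simp only [hc3]; ring)
    (by simp only [Nat.reduceAdd, hc4]; ring)
    (forall_corner (p := fun P => 0 ≤ √3 + √3 * P.1 + P.2) (by simp only [hc0]; linarith)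
      (by simp only [hc1]; linarith) (by simp only [hc2]; linarith) (by simp only [hc3]; linarith)
      (by simp only [hc4]; linarith) (by simp only [hc5]; linarith)) (by simp) hv
  refine ⟨hs, ?_⟩
  fin_cases i <;> first
    | exact h
    | (simp [hexTri, fanTri, hc0, hc1, hc2, hc3, hc4, hc5] at k1 k2 <;> linarith)

lemma LsetH_four {n : ℕ} {v : Set Pt} (hv : v ∈ LsetH (n + 1) 4) : v ∈ Simp1 (n + 1) ∧
    ∃ w : List Bool, w.length = n ∧ v = sube (hexCorner 4) (hexCorner 5) w := by
  have h3 : 0 < √3 := by positivity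
  obtain ⟨hs, i, k1, k2, h⟩ := mem_LsetH (k := fun P => √3 / 2 + P.2)
    ⟨0, 1, √3 / 2, fun P => by ring⟩ (by simp only [hc4]; ring)
    (by simp only [Nat.reduceAdd, hc5]; ring)
    (forall_corner (p := fun P => 0 ≤ √3 / 2 + P.2) (by simp only [hc0]; linarith)
      (by simp only [hc1]; linarith) (by simp only [hc2]; linarith) (by simp only [hc3]; linarith)
      (by simp only [hc4]; linarith) (by simp only [hc5]; linarith)) (by simp) hv
  refine ⟨hs, ?_⟩
  fin_cases i <;> first
    | exact h
    | (simp [hexTri, fanTri, hc0, hc1, hc2, hc3, hc4, hc5] at k1 k2)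

/-- The effective conductance, that is, the reciprocal of `RH`. -/
def conductance (n : ℕ) : ℝ :=
  sInf {e : ℝ | ∃ f : Set Pt → ℝ, (∀ p ∈ LsetH n 0 ∪ LsetH n 1, f p = 0) ∧
    (∀ p ∈ LsetH n 3 ∪ LsetH n 4, f p = 1) ∧ e = energy (cH n) f}

/-- Every admissible potential on the hexacarpet graph bounds `sig`: its values on the edges are a
potential on the subdivided triangle that vanishes on one side and equals one on half of
each of the other two. -/
lemma sig_le_energy {n : ℕ} {f : Set Pt → ℝ}
    (h0 : ∀ p ∈ LsetH (n + 1) 0 ∪ LsetH (n + 1) 1, f p = 0)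
    (h1 : ∀ p ∈ LsetH (n + 1) 3 ∪ LsetH (n + 1) 4, f p = 1) :
    sig (n + 1) ≤ 3200 * energy (cH (n + 1)) f := by
  have hA : Adm (n + 1)
      (pr (fun w => f (sube (hexCorner 0) (hexCorner 1) w))
        (fun w => f (sube (hexCorner 2) (hexCorner 1) w)))
      (pr (fun w => f (sube (hexCorner 2) (hexCorner 3) w))
        (fun w => f (sube (hexCorner 4) (hexCorner 3) w)))
      (pr (fun w => f (sube (hexCorner 0) (hexCorner 5) w))
        (fun w => f (sube (hexCorner 4) (hexCorner 5) w)))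
      (energy (cH (n + 1)) f) := by
    refine ⟨_, _, _, _, _, _, _, _, _, _, _, _,
      adm_of_potential f n (hexCorner 0) (hexCorner 1) (0, 0),
      adm_of_potential f n (hexCorner 2) (hexCorner 1) (0, 0),
      adm_of_potential f n (hexCorner 2) (hexCorner 3) (0, 0),
      adm_of_potential f n (hexCorner 4) (hexCorner 3) (0, 0),
      adm_of_potential f n (hexCorner 0) (hexCorner 5) (0, 0),
      adm_of_potential f n (hexCorner 4) (hexCorner 5) (0, 0), ?_⟩
    refine le_trans (le_of_eq ?_) (energy_ge n f)
    rw [Fin.sum_univ_six]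
    rfl
  refine sig_le_of_adm hA (fun w hw => ?_) (fun w hw => ?_) (fun w hw => ?_)
  · match w, hw with
    | false :: w, hw =>
      exact h0 _ (.inl (sube_mem_LsetH (i := 0) (c := (0, 0)) rfl (by simpa using hw) rfl))
    | true :: w, hw =>
      exact h0 _ (.inr (sube_mem_LsetH (i := 1) (c := (0, 0)) rfl (by simpa using hw)
        (segment_symm ℝ _ _)))
  · exact h1 _ (.inl (sube_mem_LsetH (i := 3) (c := (0, 0)) rfl hw (segment_symm ℝ _ _)))
  · exact h1 _ (.inr (sube_mem_LsetH (i := 5) (c := (0, 0)) rfl hw rfl))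

/-- The constant potentials `0, 1, 1` on the sides of the triangle extend to an admissible potential
on the hexacarpet graph. -/
lemma exists_potential {n : ℕ} {s : ℝ} (hs : s ∈ SS (n + 1)) : ∃ f : Set Pt → ℝ,
    (∀ p ∈ LsetH (n + 1) 0 ∪ LsetH (n + 1) 1, f p = 0) ∧
    (∀ p ∈ LsetH (n + 1) 3 ∪ LsetH (n + 1) 4, f p = 1) ∧
    energy (cH (n + 1)) f ≤ s / 3 := by
  obtain ⟨g1, g2, g3, H⟩ := hexFan
  obtain ⟨G, hE, hG⟩ := H.realize (realizable n) (hs.2 0 1 1)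
  obtain ⟨f, hf, hfE⟩ := exists_energy_eq n G
  refine ⟨f, ?_, ?_, ?_⟩
  · rintro p (hp | hp)
    · obtain ⟨hp, w, hw, rfl⟩ := LsetH_zero hp
      exact (hf _ hp).trans (hG w hw).1
    · obtain ⟨hp, w, hw, rfl⟩ := LsetH_one hp
      exact (hf _ hp).trans (hG w hw).2.1
  · rintro p (hp | hp)
    · obtain ⟨hp, w, hw, rfl⟩ := LsetH_three hp
      exact (hf _ hp).trans (hG w hw).2.2.2.1
    · obtain ⟨hp, w, hw, rfl⟩ := LsetH_four hp
      exact (hf _ hp).trans (hG w hw).2.2.2.2.2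
  · rw [hfE]
    refine hE.trans (le_of_eq ?_)
    unfold Q
    ring

lemma conductance_ge (n : ℕ) : sig (n + 1) / 3200 ≤ conductance (n + 1) := by
  obtain ⟨s, hs⟩ := SS_ne (n + 1)
  obtain ⟨f, h0, h1, -⟩ := exists_potential hs
  refine le_csInf ⟨_, f, h0, h1, rfl⟩ ?_
  rintro e ⟨f, h0, h1, rfl⟩
  have := sig_le_energy h0 h1
  linarith

lemma conductance_le (n : ℕ) : conductance (n + 1) ≤ sig (n + 1) / 3 := by
  have h : 3 * conductance (n + 1) ≤ sig (n + 1) := by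
    refine le_sig fun s hs => ?_
    obtain ⟨f, h0, h1, hE⟩ := exists_potential hs
    have h2 : conductance (n + 1) ≤ energy (cH (n + 1)) f := by
      refine csInf_le ⟨sig (n + 1) / 3200, ?_⟩ ⟨f, h0, h1, rfl⟩
      rintro e ⟨f, h0, h1, rfl⟩
      have := sig_le_energy h0 h1
      linarith
    linarith
  linarith

/-! ### The growth rate -/

lemma log_sig_bounds (n : ℕ) :
    n * Real.log (3 / 4) ≤ Real.log (sig n) ∧ Real.log (sig n) ≤ n * Real.log (4 / 5) := by
  rw [← Real.log_pow, ← Real.log_pow]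
  exact ⟨Real.log_le_log (by positivity) (sig_lower n), Real.log_le_log (sig_pos n) (sig_upper n)⟩

lemma exists_sig_lim : ∃ L : ℝ,
    Filter.Tendsto (fun n : ℕ => Real.log (sig n) / n) Filter.atTop (nhds L) ∧
      Real.log (3 / 4) ≤ L ∧ L ≤ Real.log (4 / 5) := by
  have hsub : Subadditive fun n => Real.log (sig n) := fun n m => by
    rw [← Real.log_mul (sig_pos n).ne' (sig_pos m).ne']
    exact Real.log_le_log (sig_pos _) (sig_mul n m)
  have hb : ∀ n : ℕ, n ≠ 0 → Real.log (3 / 4) ≤ Real.log (sig n) / n ∧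
      Real.log (sig n) / n ≤ Real.log (4 / 5) := by
    intro n hn
    have hn : (0 : ℝ) < n := by positivity
    rw [le_div_iff₀ hn, div_le_iff₀ hn, mul_comm _ (n : ℝ), mul_comm _ (n : ℝ)]
    exact log_sig_bounds n
  have hbdd : BddBelow (Set.range fun n : ℕ => Real.log (sig n) / n) := by
    refine ⟨Real.log (3 / 4), ?_⟩
    rintro _ ⟨n, rfl⟩
    rcases eq_or_ne n 0 with rfl | hn
    · simpa using Real.log_nonpos (by norm_num) (by norm_num)
    · exact (hb n hn).1
  have hlim := hsub.tendsto_lim hbdd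
  have hev := Filter.eventually_ne_atTop (0 : ℕ)
  exact ⟨_, hlim, ge_of_tendsto hlim (hev.mono fun n hn => (hb n hn).1),
    le_of_tendsto hlim (hev.mono fun n hn => (hb n hn).2)⟩

lemma log_RH_bounds {n : ℕ} (hn : n ≠ 0) :
    -Real.log (sig n) + Real.log 3 ≤ Real.log (RH n) ∧
      Real.log (RH n) ≤ -Real.log (sig n) + Real.log 3200 := by
  obtain ⟨n, rfl⟩ := Nat.exists_eq_succ_of_ne_zero hn
  have h1 := conductance_ge n
  have h2 := conductance_le n
  have hs := sig_pos (n + 1)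
  have hc : 0 < conductance (n + 1) := lt_of_lt_of_le (by positivity) h1
  have hR : Real.log (RH (n + 1)) = -Real.log (conductance (n + 1)) := Real.log_inv _
  have k1 := Real.log_le_log (by positivity) h1
  have k2 := Real.log_le_log hc h2
  rw [Real.log_div hs.ne' (by norm_num)] at k1 k2
  rw [hR]
  constructor <;> linarith

end BarycentricHexacarpet

namespace BarycentricHexacarpet

/-- The hexacarpet resistance scaling factor `ρ`, defined by
`log ρ = lim (1/n) log R_n`, satisfies `5/4 ≤ ρ ≤ 3/2`. -/
theorem rho_bounds :
    ∃ ρ : ℝ, 0 < ρ ∧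
      Filter.Tendsto (fun n : ℕ => Real.log (RH n) / n) Filter.atTop (nhds (Real.log ρ)) ∧
      5 / 4 ≤ ρ ∧ ρ ≤ 3 / 2 := by
  obtain ⟨L, hL, h1, h2⟩ := exists_sig_lim
  refine ⟨Real.exp (-L), Real.exp_pos _, ?_, ?_, ?_⟩
  · rw [Real.log_exp]
    have hc : ∀ c : ℝ, Filter.Tendsto (fun n : ℕ => -(Real.log (sig n) / n) + c / n) Filter.atTop
        (nhds (-L)) := fun c => by
      simpa using hL.neg.add (tendsto_const_div_atTop_nhds_zero_nat c)
    have hev := Filter.eventually_ne_atTop (0 : ℕ)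
    refine tendsto_of_tendsto_of_tendsto_of_le_of_le' (hc (Real.log 3)) (hc (Real.log 3200))
      (hev.mono fun n hn => ?_) (hev.mono fun n hn => ?_)
    · rw [← neg_div, ← add_div]
      exact div_le_div_of_nonneg_right (log_RH_bounds hn).1 (Nat.cast_nonneg n)
    · rw [← neg_div, ← add_div]
      exact div_le_div_of_nonneg_right (log_RH_bounds hn).2 (Nat.cast_nonneg n)
  · have h : Real.log (4 / 5) = -Real.log (5 / 4) := by rw [← Real.log_inv]; norm_num
    rw [← Real.exp_log (show (0 : ℝ) < 5 / 4 by norm_num)]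
    exact Real.exp_le_exp.2 (by linarith)
  · have h : Real.log (3 / 4) = -Real.log (4 / 3) := by rw [← Real.log_inv]; norm_num
    have h3 : Real.exp (-L) ≤ 4 / 3 := by
      rw [← Real.exp_log (show (0 : ℝ) < 4 / 3 by norm_num)]
      exact Real.exp_le_exp.2 (by linarith)
    linarith

end BarycentricHexacarpet
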